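/- There exist a finitely presented group A₂ which is NFQ and has trivial center, a natural number n with a surjective homomorphism f : FreeGroup (Fin n) →* A₂ arising from a finite presentation of A₂, and a computable sequence z : ℕ → List (Fin n × Bool) of words, such that: (1) for every r ∈ ℕ, the element of A₂ represented by the word z r has order at most 2 (its square is the identity); and (2) the word problem for the set {z r : r ∈ ℕ} is unsolvable, i.e. there is no computable function q : ℕ → Bool with q r = true if and only if the element of A₂ represented by z r is the identity. -/

import Mathlib

/-!
The group is built in three stages, starting from a machine with unsolvable halting problem.

*Reachability.* A configuration of a multi-stack machine is a vector of integers: the number of the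
state, and each stack read as a number in a fixed base. A transition depends on the state and the
top letters only, so the machine is a finite system of affine rules `a + m * w ↦ b + n * w` on
`ℤ ^ ι` with nonzero slopes (`StackMachine.Coding.affine`). The rules are deterministic and fix the
halting vector `h`, hence a vector is equivalent to `h` under the rules exactly when it reaches `h`
(`mem_cls_iff`), which is undecidable (`exists_undecidable_affine`).

*Involutions.* Take generators `x i` (commuting), `e`, `f`, `d`, `s` and `ρ j`, and let `z α` be the
conjugate of `⁅e, f⁆` by the product of the `x i ^ α i`. The relators (`Affine.relator`) make `ρ j`
commute with `s` and conjugate `z α` to `z β` when rule `j` takes `α` to `β`, and let `s` commute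
with `z h`; thus `s` commutes with `z α` for `α` equivalent to `h`. They also give `⁅e, f⁆` order at
most two and let the group generated by `e, f, d`, which contains the `z α` for the input vectors
`α`, commute with its conjugate by `s`; therefore `⁅s, z α⁆ ^ 2 = 1`. Conversely `⁅s, z α⁆ ≠ 1` for
the other input vectors, by `Affine.exists_model`: realise `x i, e, f, d` by triangular matrices
over the group ring `𝔽₂[ℤ ^ ι]`, with `z α` the elementary matrix having corner entry the group
element `α`, adjoin `s` by amalgamating with a central quotient of a wreath product with `C₂`, chosen
so that `s` commutes with `z α` exactly for `α` in the class of `h` (`SwapData.commute_s_iff`), and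
adjoin the `ρ j` as elements conjugating two embeddings of a group (`exists_conj_overgroup`). The
embeddings exist because the two sides of a rule pull the class of `h` back to the same set.

*No finite quotients and trivial center.* In a finite group, elements `x 0, x 1, x 2, x 3` with each
`x i` conjugating `x (i + 1)` (cyclically) to its square are trivial, while in Higman's group they
have infinite order (`exists_higman`). Replacing each generator by a product of two members of such
quadruples embeds the group of the second stage in a finitely presented group `G` generated by such
quadruples (`exists_nfq_embedding`), which is NFQ. The free product `G * G` is still NFQ, and has
trivial center (`center_coprod`). The test words `⁅s, z α⁆`, rewritten in the generators of `G * G`,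
have the required properties.
-/

/-- A group is NFQ ('no finite quotients') if it has no proper subgroup of finite index. -/
def NFQ (G : Type*) [Group G] : Prop :=
  ∀ H : Subgroup G, H.index ≠ 0 → H = ⊤

/-- A group is finitely presented if it is isomorphic to the quotient of a free group of
finite rank by the normal closure of a finite set of relators. -/
def IsFinitelyPresented (G : Type*) [Group G] : Prop :=
  ∃ (n : ℕ) (R : Finset (FreeGroup (Fin n))),
    Nonempty (G ≃* PresentedGroup (R : Set (FreeGroup (Fin n))))

/-! ### Amalgams and conjugating embeddings -/

open Monoid in
/-- Maps of vertex and base groups induce an injection of amalgams as soon as no element from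
outside the base is sent into the base: a reduced word then has a reduced image. -/
theorem pushoutI_map_injective {ι : Type} {H H' : Type} {G G' : ι → Type}
    [Group H] [Group H'] [∀ i, Group (G i)] [∀ i, Group (G' i)]
    {φ : ∀ i, H →* G i} {φ' : ∀ i, H' →* G' i}
    (hφ : ∀ i, Function.Injective (φ i)) (hφ' : ∀ i, Function.Injective (φ' i))
    (α : H →* H') (hα : Function.Injective α)
    (g : ∀ i, G i →* G' i)
    (hr : ∀ i x, g i x ∈ (φ' i).range → x ∈ (φ i).range)
    (Φ : PushoutI φ →* PushoutI φ')
    (hΦ : ∀ i x, Φ (PushoutI.of i x) = PushoutI.of i (g i x))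
    (hΦb : ∀ x, Φ (PushoutI.base φ x) = PushoutI.base φ' (α x)) :
    Function.Injective Φ := by
  classical
  rw [injective_iff_map_eq_one]
  intro x hx
  obtain ⟨d⟩ := PushoutI.NormalWord.transversal_nonempty φ hφ
  obtain ⟨w, rfl⟩ : ∃ w : PushoutI.NormalWord d, w.prod = x :=
    PushoutI.NormalWord.equiv.symm.surjective x
  have hl : ∀ p ∈ w.toList, p.2 ∉ (φ p.1).range := by
    intro p hp hmem
    have hs := w.normalized p.1 p.2 hp
    -- `p.2 = p.2 * 1 = 1 * p.2` are two factorisations along base times transversal.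
    have h1 := @(d.compl p.1).1 (⟨p.2, hmem⟩, ⟨1, d.one_mem _⟩) (⟨1, one_mem _⟩, ⟨p.2, hs⟩)
      (by simp)
    exact w.ne_one p hp (by simpa using congrArg (fun q => (q.1 : G p.1)) h1)
  let w' : CoprodI.Word G' :=
    { toList := w.toList.map fun p => ⟨p.1, g p.1 p.2⟩
      ne_one := by
        intro l hl'
        obtain ⟨p, hp, rfl⟩ := List.mem_map.1 hl'
        intro h1
        exact hl p hp (hr _ _ (by rw [show g p.1 p.2 = 1 from h1]; exact one_mem _))
      chain_ne := by
        rw [List.isChain_map]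
        exact w.chain_ne }
  have hw' : PushoutI.Reduced φ' w' := by
    intro l hl'
    obtain ⟨p, hp, rfl⟩ := List.mem_map.1 hl'
    exact fun h => hl p hp (hr _ _ h)
  have hprod : Φ (PushoutI.ofCoprodI w.toWord.prod) = PushoutI.ofCoprodI w'.prod := by
    simp only [CoprodI.Word.prod, map_list_prod, List.map_map, w']
    congr 1
    refine List.map_congr_left fun p _ => ?_
    simp [hΦ]
  have hx' : PushoutI.base φ' (α w.head) * PushoutI.ofCoprodI w'.prod = 1 := by
    rw [← hprod, ← hΦb, ← map_mul]
    exact hx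
  have hnil := PushoutI.Reduced.eq_empty_of_mem_range hφ' hw'
    ⟨(α w.head)⁻¹, by rw [map_inv]; exact inv_eq_of_mul_eq_one_right hx'⟩
  have hhead : w.head = 1 := by
    rw [hnil] at hx'
    simp only [CoprodI.Word.prod_empty, map_one, mul_one] at hx'
    exact hα (PushoutI.base_injective hφ' (by simpa using hx'))
  have hlist : w.toList = [] := by
    have := congrArg CoprodI.Word.toList hnil
    simpa [w', CoprodI.Word.empty] using this
  simp [PushoutI.NormalWord.prod, hhead, CoprodI.Word.prod, hlist]

/-- Any family of pairs of embeddings can be realised by conjugation in an overgroup. In the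
permutations of `G × (G × ℕ)`, on which `G` acts freely with orbits indexed by `G × ℕ`, each `F j`
acts freely through either embedding with `|G × ℕ|` orbits, hence the two actions are conjugate. -/
theorem exists_conj_overgroup {J : Type} (F : J → Type) [∀ j, Group (F j)] (G : Type) [Group G]
    (i k : ∀ j, F j →* G) (hi : ∀ j, Function.Injective (i j))
    (hk : ∀ j, Function.Injective (k j)) :
    ∃ (Γ : Type) (_ : Group Γ) (e : G →* Γ) (t : J → Γ), Function.Injective e ∧
      ∀ j g, t j * e (i j g) * (t j)⁻¹ = e (k j g) := by
  classical
  have key : ∀ (F : Type) [Group F] (i : F →* G), Function.Injective i →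
      ∃ E : F × (G × ℕ) ≃ G × (G × ℕ), ∀ f f' c,
        E (f * f', c) = (i f * (E (f', c)).1, (E (f', c)).2) := by
    intro F _ i hi
    -- A transversal `S` of `F` in `G` labels the `F`-orbits by `S × (G × ℕ)`, which has the
    -- cardinality of `G × ℕ`; the factor `ℕ` makes this true for finite `G` as well.
    obtain ⟨S, hS, -⟩ := i.range.exists_isComplement_right 1
    have hne : Nonempty S := ⟨(hS.equiv 1).2⟩
    have hc : Nonempty (S × (G × ℕ) ≃ (G × ℕ)) := by
      rw [← Cardinal.eq, Cardinal.mk_prod]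
      simp only [Cardinal.lift_id]
      refine Cardinal.mul_eq_right (Cardinal.aleph0_le_mk _) ?_ (Cardinal.mk_ne_zero _)
      refine (Cardinal.mk_set_le S).trans ?_
      exact Cardinal.mk_le_of_injective (f := fun g => (g, 0)) (fun a b h => (Prod.ext_iff.1 h).1)
    obtain ⟨c⟩ := hc
    let E1 : F ≃ i.range := (MonoidHom.ofInjective hi).toEquiv
    refine ⟨((Equiv.refl F).prodCongr c.symm).trans <|
      (Equiv.prodAssoc F S (G × ℕ)).symm.trans <|
      ((E1.prodCongr (Equiv.refl S)).trans hS.equiv.symm).prodCongr (Equiv.refl _), ?_⟩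
    intro f f' c
    simp only [Equiv.trans_apply, Equiv.prodCongr_apply, Prod.map, Equiv.refl_apply,
      Equiv.prodAssoc_symm_apply, Prod.mk.injEq, and_true]
    change i (f * f') * _ = i f * (i f' * _)
    rw [map_mul, mul_assoc]
  choose Ei hEi using fun j => key (F j) (i j) (hi j)
  choose Ek hEk using fun j => key (F j) (k j) (hk j)
  let e : G →* Equiv.Perm (G × (G × ℕ)) :=
    { toFun := fun g => (Equiv.mulLeft g).prodCongr (Equiv.refl _)
      map_one' := by ext <;> simp
      map_mul' := fun a b => by ext <;> simp [mul_assoc] }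
  refine ⟨_, inferInstance, e, fun j => (Ei j).symm.trans (Ek j), ?_, ?_⟩
  · intro a b h
    have := congrArg (fun p : Equiv.Perm (G × (G × ℕ)) => (p (1, (1, 0))).1) h
    simpa [e] using this
  · intro j g
    rw [mul_inv_eq_iff_eq_mul]
    ext1 x
    obtain ⟨⟨f, c⟩, rfl⟩ := (Ei j).surjective x
    simp only [Equiv.Perm.mul_apply, Equiv.trans_apply]
    have h1 : e (i j g) (Ei j (f, c)) = Ei j (g * f, c) := by rw [hEi]; rfl
    have h2 : e (k j g) (Ek j (f, c)) = Ek j (g * f, c) := by rw [hEk]; rfl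
    rw [h1]; simp [h2]

/-! ### Adjoining a swap to a subgroup -/

/-- The wreath product `P ≀ C₂`: pairs `(l, r)` together with a bit `c` recording the swap. -/
@[ext] structure Wr (P : Type) where
  l : P
  r : P
  c : Bool

namespace Wr
variable {P Q : Type} [Group P] [Group Q]

instance : Mul (Wr P) :=
  ⟨fun a b => ⟨a.l * bif a.c then b.r else b.l, a.r * bif a.c then b.l else b.r, xor a.c b.c⟩⟩
instance : One (Wr P) := ⟨⟨1, 1, false⟩⟩
instance : Inv (Wr P) :=
  ⟨fun a => ⟨bif a.c then a.r⁻¹ else a.l⁻¹, bif a.c then a.l⁻¹ else a.r⁻¹, a.c⟩⟩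

theorem mul_def (a b : Wr P) : a * b =
  ⟨a.l * bif a.c then b.r else b.l, a.r * bif a.c then b.l else b.r, xor a.c b.c⟩ := rfl
theorem one_def : (1 : Wr P) = ⟨1, 1, false⟩ := rfl
theorem inv_def (a : Wr P) :
  a⁻¹ = ⟨bif a.c then a.r⁻¹ else a.l⁻¹, bif a.c then a.l⁻¹ else a.r⁻¹, a.c⟩ := rfl

instance : Group (Wr P) := Group.ofLeftAxioms
  (by
    rintro ⟨a, b, c⟩ ⟨a', b', c'⟩ ⟨a'', b'', c''⟩
    cases c <;> cases c' <;> cases c'' <;> simp [mul_def, mul_assoc])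
  (by rintro ⟨a, b, c⟩; simp [mul_def, one_def])
  (by rintro ⟨a, b, c⟩; cases c <;> simp [mul_def, one_def, inv_def])

/-- Functoriality of the wreath product. -/
def map (f : P →* Q) : Wr P →* Wr Q where
  toFun a := ⟨f a.l, f a.r, a.c⟩
  map_one' := by simp [one_def]
  map_mul' := by
    rintro ⟨a, b, c⟩ ⟨a', b', c'⟩
    cases c <;> simp [mul_def]

/-- The embedding of `P` as the first coordinate. -/
def inl : P →* Wr P where
  toFun a := ⟨a, 1, false⟩
  map_one' := rfl
  map_mul' a b := by simp [mul_def]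

/-- The antidiagonal copy `{(n, n⁻¹)}` of a central subgroup `N`. -/
def anti (N : Subgroup P) (hN : N ≤ Subgroup.center P) : Subgroup (Wr P) where
  carrier := {a | a.l ∈ N ∧ a.r = a.l⁻¹ ∧ a.c = false}
  one_mem' := by simp [one_def, N.one_mem]
  mul_mem' := by
    rintro ⟨a, b, c⟩ ⟨a', b', c'⟩ ⟨h1, h2, h3⟩ ⟨h1', h2', h3'⟩
    simp only at h1 h2 h3 h1' h2' h3'
    subst h2 h3 h2' h3'
    refine ⟨by simpa [mul_def] using N.mul_mem h1 h1', ?_, rfl⟩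
    simpa [mul_def] using congrArg Inv.inv (Subgroup.mem_center_iff.1 (hN h1) a')
  inv_mem' := by
    rintro ⟨a, b, c⟩ ⟨h1, h2, h3⟩
    simp only at h1 h2 h3
    subst h2 h3
    exact ⟨by simpa [inv_def] using h1, by simp [inv_def], rfl⟩

theorem mem_anti {N : Subgroup P} {hN : N ≤ Subgroup.center P} {a : Wr P} :
    a ∈ anti N hN ↔ a.l ∈ N ∧ a.r = a.l⁻¹ ∧ a.c = false := Iff.rfl

instance (N : Subgroup P) (hN : N ≤ Subgroup.center P) : (anti N hN).Normal := by
  constructor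
  rintro ⟨a, b, c⟩ ⟨h1, h2, h3⟩ ⟨a', b', c'⟩
  simp only at h1 h2 h3
  subst h2 h3
  have hc : ∀ g, g * a = a * g := Subgroup.mem_center_iff.1 (hN h1)
  have hc' : ∀ g, g * a⁻¹ = a⁻¹ * g := Subgroup.mem_center_iff.1 (hN (N.inv_mem h1))
  rw [mem_anti]
  cases c' <;> simp [mul_def, inv_def, hc, hc', h1]

end Wr

/-- `K` amalgamated along `P` with the central product of two copies of `P` over `N`, extended
by the swap.  In it the swap commutes with exactly those `p ∈ P` lying in `N`. -/
structure SwapData (K : Type) [Group K] where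
  P : Subgroup K
  N : Subgroup P
  hN : N ≤ Subgroup.center P

namespace SwapData
variable {K K' : Type} [Group K] [Group K']

/-- The swap vertex group. -/
abbrev T (D : SwapData K) : Type := Wr D.P ⧸ Wr.anti D.N D.hN

/-- The two vertex groups of the amalgam: `K` at `false` and the swap vertex group at `true`. -/
def V (D : SwapData K) : Bool → Type
  | false => K
  | true => D.T

instance (D : SwapData K) : ∀ b, Group (D.V b)
  | false => inferInstanceAs (Group K)
  | true => inferInstanceAs (Group D.T)

/-- The edge inclusions. -/
def edge (D : SwapData K) : ∀ b, D.P →* D.V b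
  | false => D.P.subtype
  | true => (QuotientGroup.mk' (Wr.anti D.N D.hN)).comp Wr.inl

theorem edge_injective (D : SwapData K) : ∀ b, Function.Injective (D.edge b)
  | false => Subtype.val_injective
  | true => by
    rw [injective_iff_map_eq_one]
    intro a ha
    have := (QuotientGroup.eq_one_iff _).1 ha
    simpa [Wr.mem_anti, Wr.inl] using this.2.1.symm

/-- The amalgam. -/
abbrev M (D : SwapData K) : Type := Monoid.PushoutI D.edge

/-- The inclusion of `K`. -/
def κ (D : SwapData K) : K →* D.M := Monoid.PushoutI.of (φ := D.edge) false

/-- The inclusion of the swap vertex group. -/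
def τ (D : SwapData K) : D.T →* D.M := Monoid.PushoutI.of (φ := D.edge) true

/-- The swap. -/
def s (D : SwapData K) : D.M := D.τ (QuotientGroup.mk ⟨1, 1, true⟩)

theorem κ_eq (D : SwapData K) (p : D.P) : D.κ p = D.τ (QuotientGroup.mk ⟨p, 1, false⟩) :=
  (Monoid.PushoutI.of_apply_eq_base D.edge false p).trans
    (Monoid.PushoutI.of_apply_eq_base D.edge true p).symm

theorem τ_injective (D : SwapData K) : Function.Injective D.τ :=
  Monoid.PushoutI.of_injective D.edge_injective true

theorem s_conj (D : SwapData K) (p : D.P) :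
    D.s * D.κ p * D.s⁻¹ = D.τ (QuotientGroup.mk ⟨1, p, false⟩) := by
  rw [κ_eq, s, ← map_inv, ← map_mul, ← map_mul]
  congr 1
  rw [← QuotientGroup.mk_inv, ← QuotientGroup.mk_mul, ← QuotientGroup.mk_mul]
  congr 1
  simp [Wr.mul_def, Wr.inv_def]

/-- The two copies of `P` in the swap vertex group commute. -/
theorem commute_s_conj (D : SwapData K) (p q : D.P) :
    Commute (D.κ p) (D.s * D.κ q * D.s⁻¹) := by
  rw [s_conj, κ_eq]
  refine Commute.map (f := D.τ) ?_
  rw [commute_iff_eq, ← QuotientGroup.mk_mul, ← QuotientGroup.mk_mul]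
  simp [Wr.mul_def]

/-- The commutator of `(p, 1)` with the swap is `(p⁻¹, p)` up to inversion, and is trivial in the
quotient precisely for `p ∈ N`. -/
theorem commute_s_iff (D : SwapData K) (p : D.P) : Commute D.s (D.κ p) ↔ p ∈ D.N := by
  rw [commute_iff_eq, ← mul_inv_eq_iff_eq_mul, s_conj, κ_eq, D.τ_injective.eq_iff, eq_comm,
    QuotientGroup.eq, Wr.mem_anti]
  simp [Wr.mul_def, Wr.inv_def]

/-- An embedding `K →* K'` respecting membership in `P` and in `N` extends to an embedding of the
amalgams taking the swap to the swap. -/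
theorem exists_map (D : SwapData K) (D' : SwapData K') (Φ : K →* K')
    (hΦ : Function.Injective Φ) (hP : ∀ x, Φ x ∈ D'.P ↔ x ∈ D.P)
    (hN : ∀ p : D.P, (⟨Φ p, (hP p).2 p.2⟩ : D'.P) ∈ D'.N ↔ p ∈ D.N) :
    ∃ F : D.M →* D'.M, Function.Injective F ∧ (∀ x, F (D.κ x) = D'.κ (Φ x)) ∧ F D.s = D'.s := by
  let α : D.P →* D'.P := (Φ.comp D.P.subtype).codRestrict D'.P fun p => (hP p).2 p.2
  have hα : Function.Injective α := fun a b h =>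
    Subtype.ext (hΦ (congrArg Subtype.val h))
  have hNα : ∀ p, α p ∈ D'.N ↔ p ∈ D.N := hN
  let gT : D.T →* D'.T := QuotientGroup.map _ _ (Wr.map α) (by
    rintro ⟨a, b, c⟩ ⟨h1, h2, h3⟩
    simp only at h1 h2 h3
    exact ⟨(hNα a).2 h1, by simp [Wr.map, h2], h3⟩)
  let g : ∀ b, D.V b →* D'.V b := fun b => match b with
    | false => Φ
    | true => gT
  have hcomp : ∀ b, ((Monoid.PushoutI.of (φ := D'.edge) b).comp (g b)).comp (D.edge b) =
      (Monoid.PushoutI.base D'.edge).comp α := by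
    intro b
    ext p
    rw [MonoidHom.comp_apply, MonoidHom.comp_apply, MonoidHom.comp_apply,
      ← Monoid.PushoutI.of_apply_eq_base D'.edge b]
    cases b with
    | false => rfl
    | true =>
      refine congrArg (Monoid.PushoutI.of (φ := D'.edge) true) ?_
      change (QuotientGroup.mk (Wr.map α ⟨p, 1, false⟩) : D'.T) = QuotientGroup.mk ⟨α p, 1, false⟩
      simp [Wr.map]
  let F : D.M →* D'.M := Monoid.PushoutI.lift
    (fun b => (Monoid.PushoutI.of (φ := D'.edge) b).comp (g b))
    ((Monoid.PushoutI.base D'.edge).comp α) hcomp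
  have hF : ∀ b x, F (Monoid.PushoutI.of b x) = Monoid.PushoutI.of b (g b x) := by
    intro b x
    simp [F]
  refine ⟨F, ?_, fun x => hF false x, ?_⟩
  · refine pushoutI_map_injective D.edge_injective D'.edge_injective α hα g ?_ F hF ?_
    · rintro (_ | _) x ⟨p, hp⟩
      · have hp' : (p : K') = Φ x := hp
        exact ⟨⟨x, (hP x).1 (hp' ▸ p.2)⟩, rfl⟩
      · obtain ⟨⟨a, b, c⟩, rfl⟩ := QuotientGroup.mk_surjective (s := Wr.anti D.N D.hN) x
        have hp' : (QuotientGroup.mk ⟨p, 1, false⟩ : D'.T) =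
          QuotientGroup.mk (Wr.map α ⟨a, b, c⟩) := hp
        rw [QuotientGroup.eq, Wr.mem_anti] at hp'
        simp only [Wr.mul_def, Wr.inv_def, Wr.map, MonoidHom.coe_mk, OneHom.coe_mk] at hp'
        obtain ⟨h1, h2, h3⟩ := hp'
        have hc : c = false := by simpa using h3
        subst hc
        simp only [cond_false, inv_one, one_mul] at h1 h2
        have hb : b ∈ D.N := by
          rw [← hNα, h2]
          exact D'.N.inv_mem h1
        refine ⟨a * b, ?_⟩
        change (QuotientGroup.mk ⟨a * b, 1, false⟩ : D.T) = QuotientGroup.mk _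
        rw [QuotientGroup.eq, Wr.mem_anti]
        simp [Wr.mul_def, Wr.inv_def, hb]
    · intro x
      simp [F]
  · refine (hF true _).trans ?_
    change D'.τ (QuotientGroup.mk (Wr.map α ⟨1, 1, true⟩)) = D'.s
    simp [Wr.map, s]

end SwapData

/-! ### The matrix group -/

/-- The group ring over `𝔽₂` of the free abelian group on `ι`. -/
abbrev LA (ι : Type) := AddMonoidAlgebra (ZMod 2) (ι → ℤ)

/-- The group element `w` in the group ring. -/
noncomputable def dl {ι : Type} (w : ι → ℤ) : LA ι := AddMonoidAlgebra.single w 1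

section dl
variable {ι : Type}

theorem dl_zero : dl (0 : ι → ℤ) = 1 := rfl
theorem dl_add (v w : ι → ℤ) : dl (v + w) = dl v * dl w := by
  simp [dl, AddMonoidAlgebra.single_mul_single]
theorem dl_mul_neg (v : ι → ℤ) : dl v * dl (-v) = 1 := by
  rw [← dl_add, add_neg_cancel, dl_zero]
theorem dl_injective : Function.Injective (dl : (ι → ℤ) → LA ι) := by
  intro a b h
  exact Finsupp.single_left_injective (one_ne_zero) (congrArg AddMonoidAlgebra.coeff h)

/-- Multiplication by `m` on exponents. -/
def mulHom (m : ι → ℤ) : (ι → ℤ) →+ (ι → ℤ) := AddMonoidHom.mulLeft m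

theorem mulHom_injective {m : ι → ℤ} (hm : ∀ i, m i ≠ 0) : Function.Injective (mulHom m) := by
  intro a b h
  funext i
  exact mul_left_cancel₀ (hm i) (congrFun h i)

/-- The ring endomorphism induced by multiplication by `m` on exponents. -/
noncomputable def th (m : ι → ℤ) : LA ι →+* LA ι :=
  AddMonoidAlgebra.mapDomainRingHom (ZMod 2) (mulHom m)

theorem th_dl (m w : ι → ℤ) : th m (dl w) = dl (m * w) := by
  simp [th, dl, mulHom]

theorem th_injective {m : ι → ℤ} (hm : ∀ i, m i ≠ 0) : Function.Injective (th m) := by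
  intro a b h
  exact AddMonoidAlgebra.mapDomain_injective (mulHom_injective hm) h

/-- The exponents occurring in `z` all lie in `S`. -/
def suppIn (S : Set (ι → ℤ)) (z : LA ι) : Prop := ∀ w, z.coeff w ≠ 0 → w ∈ S

theorem suppIn_dl (S : Set (ι → ℤ)) (w : ι → ℤ) : suppIn S (dl w) ↔ w ∈ S := by
  classical
  simp [suppIn, dl, Finsupp.single_apply]

theorem suppIn_th_mul {m : ι → ℤ} (hm : ∀ i, m i ≠ 0) (a : ι → ℤ) (S : Set (ι → ℤ))
    (z : LA ι) : suppIn S (th m z * dl a) ↔ suppIn {w | a + m * w ∈ S} z := by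
  have key : ∀ w, (th m z * dl a).coeff w = (th m z).coeff (w - a) := by
    intro w
    simp [dl, sub_eq_add_neg]
  have key2 : ∀ w, (th m z).coeff (m * w) = z.coeff w := fun w =>
    Finsupp.mapDomain_apply (mulHom_injective hm) z.coeff w
  constructor
  · intro h w hw
    apply h
    rwa [key, add_sub_cancel_left, key2]
  · intro h w hw
    rw [key] at hw
    by_cases hr : w - a ∈ Set.range (mulHom m)
    · obtain ⟨v, hv⟩ := hr
      have hv : m * v = w - a := hv
      rw [← hv, key2] at hw
      have := h v hw
      rwa [Set.mem_ofPred_eq, hv, add_sub_cancel] at this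
    · exact absurd (Finsupp.mapDomain_of_notMem_range z.coeff _ hr) hw

end dl

/-- The group of matrices `[[1, x, z], [0, u, y], [0, 0, v]]` over `LA ι`, with the diagonal
entries `u`, `v` group elements, stored by their exponents. -/
@[ext] structure Mat (ι : Type) where
  x : LA ι
  y : LA ι
  z : LA ι
  u : ι → ℤ
  v : ι → ℤ

namespace Mat
variable {ι : Type}

noncomputable instance : Mul (Mat ι) := ⟨fun a b =>
  ⟨b.x + a.x * dl b.u, dl a.u * b.y + a.y * dl b.v, b.z + a.x * b.y + a.z * dl b.v,
    a.u + b.u, a.v + b.v⟩⟩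
noncomputable instance : One (Mat ι) := ⟨⟨0, 0, 0, 0, 0⟩⟩
noncomputable instance : Inv (Mat ι) := ⟨fun a =>
  ⟨-a.x * dl (-a.u), -dl (-a.u) * a.y * dl (-a.v),
    a.x * dl (-a.u) * a.y * dl (-a.v) - a.z * dl (-a.v), -a.u, -a.v⟩⟩

theorem mul_def (a b : Mat ι) : a * b =
  ⟨b.x + a.x * dl b.u, dl a.u * b.y + a.y * dl b.v, b.z + a.x * b.y + a.z * dl b.v,
    a.u + b.u, a.v + b.v⟩ := rfl
theorem one_def : (1 : Mat ι) = ⟨0, 0, 0, 0, 0⟩ := rfl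
theorem inv_def (a : Mat ι) : a⁻¹ =
  ⟨-a.x * dl (-a.u), -dl (-a.u) * a.y * dl (-a.v),
    a.x * dl (-a.u) * a.y * dl (-a.v) - a.z * dl (-a.v), -a.u, -a.v⟩ := rfl

noncomputable instance : Group (Mat ι) := Group.ofLeftAxioms
  (by
    intro a b c
    simp only [mul_def, dl_add, Mat.mk.injEq]
    refine ⟨by ring, by ring, by ring, add_assoc _ _ _, add_assoc _ _ _⟩)
  (by intro a; simp [mul_def, one_def, dl_zero])
  (by
    intro a
    have hu := dl_mul_neg a.u
    have hv := dl_mul_neg a.v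
    simp only [mul_def, one_def, inv_def, Mat.mk.injEq]
    refine ⟨?_, ?_, ?_, by simp, by simp⟩
    · linear_combination (-a.x) * hu
    · linear_combination (-dl (-a.u) * a.y) * hv
    · linear_combination (a.x * dl (-a.u) * a.y - a.z) * hv)

/-- The twisted endomorphism attached to the affine map `w ↦ a + m * w` of exponents. -/
noncomputable def tw (a m : ι → ℤ) : Mat ι →* Mat ι where
  toFun p := ⟨th m p.x, th m p.y * dl a, th m p.z * dl a, m * p.u, m * p.v⟩
  map_one' := by simp [one_def]
  map_mul' p q := by
    simp only [mul_def, map_add, map_mul, th_dl, Mat.mk.injEq, mul_add, and_true, true_and]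
    exact ⟨by ring, by ring⟩

theorem tw_apply (a m : ι → ℤ) (p : Mat ι) :
    tw a m p = ⟨th m p.x, th m p.y * dl a, th m p.z * dl a, m * p.u, m * p.v⟩ := rfl

theorem mul_dl_injective (a : ι → ℤ) : Function.Injective (fun x : LA ι => x * dl a) := by
  intro x y h
  have h' : x * dl a = y * dl a := h
  have := dl_mul_neg a
  linear_combination dl (-a) * h' - (x - y) * this

theorem mul_eq_zero_iff {m : ι → ℤ} (hm : ∀ i, m i ≠ 0) (v : ι → ℤ) : m * v = 0 ↔ v = 0 :=
  ⟨fun h => mulHom_injective hm (by simpa [mulHom] using h), fun h => by simp [h]⟩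

theorem th_mul_dl_eq_zero {m : ι → ℤ} (hm : ∀ i, m i ≠ 0) (a : ι → ℤ) (z : LA ι) :
    th m z * dl a = 0 ↔ z = 0 :=
  ⟨fun h => th_injective hm (mul_dl_injective a (by simpa using h)), fun h => by simp [h]⟩

theorem tw_injective (a : ι → ℤ) {m : ι → ℤ} (hm : ∀ i, m i ≠ 0) :
    Function.Injective (tw a m) := by
  intro p q h
  simp only [tw_apply, Mat.mk.injEq] at h
  obtain ⟨h1, h2, h3, h4, h5⟩ := h
  exact Mat.ext (th_injective hm h1) (th_injective hm (mul_dl_injective a h2))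
    (th_injective hm (mul_dl_injective a h3)) (mulHom_injective hm h4) (mulHom_injective hm h5)

/-- The edge data: `P` is given by `v = 0`, and `N` by the elementary matrices with corner entry
supported in `S`. -/
noncomputable def sd (S : Set (ι → ℤ)) : SwapData (Mat ι) where
  P :=
    { carrier := {p | p.v = 0}
      one_mem' := rfl
      mul_mem' := by
        intro p q hp hq
        simp only [Set.mem_ofPred_eq] at hp hq
        simp [mul_def, hp, hq]
      inv_mem' := by
        intro p hp
        simp only [Set.mem_ofPred_eq] at hp
        simp [inv_def, hp] }
  N :=
    { carrier := {p | p.1.x = 0 ∧ p.1.y = 0 ∧ p.1.u = 0 ∧ suppIn S p.1.z}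
      one_mem' := by
        refine ⟨rfl, rfl, rfl, fun w hw => absurd rfl hw⟩
      mul_mem' := by
        rintro ⟨p, hp⟩ ⟨q, hq⟩ ⟨h1, h2, h3, h4⟩ ⟨h1', h2', h3', h4'⟩
        have hq' : q.v = 0 := hq
        simp only at h1 h2 h3 h4 h1' h2' h3' h4'
        refine ⟨by simp [mul_def, *], by simp [mul_def, *], by simp [mul_def, *], ?_⟩
        intro w hw
        simp only [Subgroup.coe_mul, mul_def, h1, hq', dl_zero, zero_mul, add_zero, mul_one,
          AddMonoidAlgebra.coeff_add, Finsupp.add_apply] at hw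
        by_cases hz : p.z.coeff w = 0
        · exact h4' w fun h => hw (by simp [h, hz])
        · exact h4 w hz
      inv_mem' := by
        rintro ⟨p, hp⟩ ⟨h1, h2, h3, h4⟩
        have hp' : p.v = 0 := hp
        simp only at h1 h2 h3 h4
        refine ⟨by simp [inv_def, *], by simp [inv_def, *], by simp [inv_def, *], ?_⟩
        intro w hw
        refine h4 w fun h => hw ?_
        simp [inv_def, *, dl_zero] }
  hN := by
    rintro ⟨p, hp⟩ ⟨h1, h2, h3, h4⟩
    rw [Subgroup.mem_center_iff]
    rintro ⟨q, hq⟩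
    have hp' : p.v = 0 := hp
    have hq' : q.v = 0 := hq
    simp only at h1 h2 h3
    refine Subtype.ext ?_
    simp [mul_def, *, dl_zero, add_comm]

/-- The twisted endomorphism of `w ↦ a + m * w` takes the corner entry `dl w` to
`dl (a + m * w)`, so it matches the `N` of the preimage of `S` with that of `S`, and extends to an
embedding of amalgams. -/
theorem exists_tw (S : Set (ι → ℤ)) (a : ι → ℤ) {m : ι → ℤ} (hm : ∀ i, m i ≠ 0) :
    ∃ F : (sd {w | a + m * w ∈ S}).M →* (sd S).M, Function.Injective F ∧
      (∀ x, F ((sd _).κ x) = (sd S).κ (tw a m x)) ∧ F (sd _).s = (sd S).s := by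
  refine SwapData.exists_map _ _ (tw a m) (tw_injective a hm) ?_ ?_
  · intro p
    exact mul_eq_zero_iff hm p.v
  · rintro ⟨p, hp⟩
    change (th m p.x = 0 ∧ th m p.y * dl a = 0 ∧ m * p.u = 0 ∧ suppIn S (th m p.z * dl a)) ↔
      (p.x = 0 ∧ p.y = 0 ∧ p.u = 0 ∧ suppIn _ p.z)
    rw [suppIn_th_mul hm, mul_eq_zero_iff hm, th_mul_dl_eq_zero hm,
      map_eq_zero_iff _ (th_injective hm)]

end Mat

/-! ### The affine rewriting group -/

open scoped commutatorElement

section xp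
variable {ι : Type} [Fintype ι] {G H : Type} [Group G] [Group H]

/-- The product of the `x i ^ α i`, in a fixed order. -/
noncomputable def xp (x : ι → G) (α : ι → ℤ) : G :=
  ((Finset.univ : Finset ι).toList.map fun i => x i ^ α i).prod

theorem map_xp (φ : G →* H) (x : ι → G) (α : ι → ℤ) : φ (xp x α) = xp (φ ∘ x) α := by
  simp [xp, map_list_prod, Function.comp_def]

theorem commute_xp {x : ι → G} (g : G) (h : ∀ i, Commute g (x i)) (α : ι → ℤ) :
    Commute g (xp x α) := by
  refine Commute.list_prod_right _ _ ?_
  intro y hy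
  obtain ⟨i, -, rfl⟩ := List.mem_map.1 hy
  exact (h i).zpow_right _

theorem xp_add {x : ι → G} (hx : ∀ i l, Commute (x i) (x l)) (α β : ι → ℤ) :
    xp x (α + β) = xp x α * xp x β := by
  unfold xp
  induction (Finset.univ : Finset ι).toList with
  | nil => simp
  | cons i L ih =>
    have hc : Commute (x i ^ β i) (L.map fun i => x i ^ α i).prod := by
      refine Commute.list_prod_right _ _ ?_
      intro y hy
      obtain ⟨l, -, rfl⟩ := List.mem_map.1 hy
      exact (hx i l).zpow_zpow _ _
    rw [List.map_cons, List.prod_cons, ih, List.map_cons, List.prod_cons, List.map_cons,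
      List.prod_cons, Pi.add_apply, zpow_add, mul_assoc, ← mul_assoc (x i ^ β i), hc.eq]
    simp only [mul_assoc]

theorem xp_mul (x : ι → G) (m α : ι → ℤ) : xp x (m * α) = xp (fun i => x i ^ m i) α := by
  simp [xp, zpow_mul]

theorem xp_single [DecidableEq ι] (x : ι → G) (i : ι) (k : ℤ) : xp x (Pi.single i k) = x i ^ k := by
  unfold xp
  have hn := (Finset.univ : Finset ι).nodup_toList
  have hi : i ∈ (Finset.univ : Finset ι).toList := by simp
  have hz : ∀ L : List ι, i ∉ L → (L.map fun l => x l ^ (Pi.single i k : ι → ℤ) l).prod = 1 := by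
    intro L hL
    refine List.prod_eq_one fun y hy => ?_
    obtain ⟨l, hl, rfl⟩ := List.mem_map.1 hy
    rw [Pi.single_eq_of_ne (by rintro rfl; exact hL hl), zpow_zero]
  generalize (Finset.univ : Finset ι).toList = L at hn hi
  induction L with
  | nil => simp at hi
  | cons l L ih =>
    rw [List.nodup_cons] at hn
    rw [List.map_cons, List.prod_cons]
    rcases List.mem_cons.1 hi with rfl | h
    · rw [hz _ hn.1, mul_one, Pi.single_eq_same]
    · rw [ih hn.2 h, Pi.single_eq_of_ne (by rintro rfl; exact hn.1 h), zpow_zero, one_mul]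

theorem map_xp_hom (φ : Multiplicative (ι → ℤ) →* G) [DecidableEq ι] (α : ι → ℤ) :
    xp (fun i => φ (.ofAdd (Pi.single i 1))) α = φ (.ofAdd α) := by
  have h : xp (fun i => (.ofAdd (Pi.single i 1) : Multiplicative (ι → ℤ))) α = .ofAdd α := by
    unfold xp
    rw [Finset.prod_map_toList]
    simp only [← ofAdd_zsmul, ← ofAdd_sum]
    congr 1
    funext i
    simp [Finset.sum_apply, Pi.single_apply]
  rw [← h, map_xp]
  rfl

end xp

/-- A system of affine rules on integer vectors, all of whose slopes are nonzero: rule `j` rewrites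
`a j + m j * w` to `b j + n j * w`, for any vector `w` (products are coordinatewise). The vector
`h` is the halting vector, and inputs are entered in coordinate `i0`. -/
structure Affine (ι J : Type) where
  a : J → ι → ℤ
  b : J → ι → ℤ
  m : J → ι → ℤ
  n : J → ι → ℤ
  hm : ∀ j i, m j i ≠ 0
  hn : ∀ j i, n j i ≠ 0
  h : ι → ℤ
  i0 : ι

namespace Affine
variable {ι J : Type}

/-- One application of a rule. -/
def Step (D : Affine ι J) (α β : ι → ℤ) : Prop :=
  ∃ j w, α = D.a j + D.m j * w ∧ β = D.b j + D.n j * w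

/-- The class of the halting vector `h`. -/
def cls (D : Affine ι J) : Set (ι → ℤ) := {α | Relation.EqvGen D.Step D.h α}

theorem cls_iff (D : Affine ι J) (j : J) (w : ι → ℤ) :
    D.a j + D.m j * w ∈ D.cls ↔ D.b j + D.n j * w ∈ D.cls :=
  have hs : D.Step (D.a j + D.m j * w) (D.b j + D.n j * w) := ⟨j, w, rfl, rfl⟩
  ⟨fun h => .trans _ _ _ h (.rel _ _ hs), fun h => .trans _ _ _ h (.symm _ _ (.rel _ _ hs))⟩

/-- The generators: `e, f, d, s` followed by the `x i` and the `ρ j`. -/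
abbrev Gen (ι J : Type) := Fin 4 ⊕ ι ⊕ J

/-- The index type of the relators. -/
abbrev RIdx (ι J : Type) := (ι × ι) ⊕ (Fin 3 × Fin 3) ⊕ (J × ι) ⊕ J ⊕ J ⊕ Fin 5

variable [Fintype ι] {G H : Type} [Group G] [Group H]

/-- The conjugate of `⁅e, f⁆` by `xp x α`. -/
noncomputable def zz (v : Gen ι J → G) (α : ι → ℤ) : G :=
  let x := xp (fun i => v (.inr (.inl i))) α
  x * ⁅v (.inl 0), v (.inl 1)⁆ * x⁻¹

/-- The relators, as functions of the generators. They say that the `x i` commute; that `e, f, d`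
commute with their conjugates by `s`; that `ρ j` conjugates `x i ^ m j i` to `x i ^ n j i` and
`zz (a j)` to `zz (b j)` and commutes with `s`; that `x i0` commutes with `e` and `d` and acts on
`f` as `d` does; that `⁅e, f⁆` has order at most two; and that `s` commutes with `zz h`. -/
noncomputable def relator (D : Affine ι J) (v : Gen ι J → G) : RIdx ι J → G
  | .inl (i, l) => ⁅v (.inr (.inl i)), v (.inr (.inl l))⁆
  | .inr (.inl (p, q)) =>
    ⁅v (.inl p.castSucc), v (.inl 3) * v (.inl q.castSucc) * (v (.inl 3))⁻¹⁆
  | .inr (.inr (.inl (j, i))) =>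
    v (.inr (.inr j)) * v (.inr (.inl i)) ^ D.m j i * (v (.inr (.inr j)))⁻¹ *
      (v (.inr (.inl i)) ^ D.n j i)⁻¹
  | .inr (.inr (.inr (.inl j))) =>
    v (.inr (.inr j)) * zz v (D.a j) * (v (.inr (.inr j)))⁻¹ * (zz v (D.b j))⁻¹
  | .inr (.inr (.inr (.inr (.inl j)))) => ⁅v (.inr (.inr j)), v (.inl 3)⁆
  | .inr (.inr (.inr (.inr (.inr t)))) => match t with
    | 0 => ⁅v (.inr (.inl D.i0)), v (.inl 0)⁆
    | 1 => ⁅v (.inr (.inl D.i0)), v (.inl 2)⁆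
    | 2 => v (.inr (.inl D.i0)) * v (.inl 1) * (v (.inr (.inl D.i0)))⁻¹ *
        (v (.inl 2) * v (.inl 1) * (v (.inl 2))⁻¹)⁻¹
    | 3 => ⁅v (.inl 0), v (.inl 1)⁆ ^ 2
    | 4 => ⁅v (.inl 3), zz v D.h⁆

theorem map_zz (φ : G →* H) (v : Gen ι J → G) (α : ι → ℤ) : φ (zz v α) = zz (φ ∘ v) α := by
  simp [zz, map_xp, map_commutatorElement, Function.comp_def]

theorem map_relator (D : Affine ι J) (φ : G →* H) (v : Gen ι J → G) (r : RIdx ι J) :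
    φ (D.relator v r) = D.relator (φ ∘ v) r := by
  rcases r with ⟨i, l⟩ | ⟨p, q⟩ | ⟨j, i⟩ | j | j | t
  · simp [relator, map_commutatorElement]
  · simp [relator, map_commutatorElement]
  · simp [relator]
  · simp [relator, map_zz]
  · simp [relator, map_commutatorElement]
  · fin_cases t <;> simp [relator, map_commutatorElement, map_zz]

/-- The test element `⁅s, ⁅e, dᵏ f d⁻ᵏ⁆⁆`, as a function of `e, f, d, s`. -/
def test (v : Fin 4 → G) (k : ℕ) : G :=
  ⁅v 3, ⁅v 0, v 2 ^ k * v 1 * (v 2 ^ k)⁻¹⁆⁆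

section derive
variable (D : Affine ι J) {v : Gen ι J → G} (hv : ∀ r, D.relator v r = 1)
include hv

theorem comm_x (i l : ι) : Commute (v (.inr (.inl i))) (v (.inr (.inl l))) :=
  commutatorElement_eq_one_iff_commute.1 (hv (.inl (i, l)))

/-- Conjugation by `ρ j` carries out rule `j` on the exponent of `zz`. -/
theorem conj_zz (j : J) (w : ι → ℤ) :
    v (.inr (.inr j)) * zz v (D.a j + D.m j * w) * (v (.inr (.inr j)))⁻¹ =
      zz v (D.b j + D.n j * w) := by
  have hx := D.comm_x hv
  have h0 : ∀ i, MulAut.conj (v (.inr (.inr j))) (v (.inr (.inl i)) ^ D.m j i) =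
      v (.inr (.inl i)) ^ D.n j i := fun i => mul_inv_eq_one.1 (hv (.inr (.inr (.inl (j, i)))))
  have h1 : MulAut.conj (v (.inr (.inr j))) (zz v (D.a j)) = zz v (D.b j) :=
    mul_inv_eq_one.1 (hv (.inr (.inr (.inr (.inl j)))))
  have h2 : MulAut.conj (v (.inr (.inr j))) (xp (fun i => v (.inr (.inl i))) (D.m j * w)) =
      xp (fun i => v (.inr (.inl i))) (D.n j * w) := by
    rw [xp_mul, xp_mul]
    refine (map_xp (MulAut.conj (v (.inr (.inr j)))).toMonoidHom _ _).trans ?_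
    congr 1
    funext i
    exact h0 i
  have hsplit : ∀ α β : ι → ℤ, zz v (α + β) = xp (fun i => v (.inr (.inl i))) β * zz v α *
      (xp (fun i => v (.inr (.inl i))) β)⁻¹ := by
    intro α β
    simp only [zz]
    rw [add_comm, xp_add hx]
    group
  rw [hsplit, hsplit, ← MulAut.conj_apply, map_mul, map_mul, map_inv, h1, h2]

theorem commute_of_cls {α : ι → ℤ} (hα : α ∈ D.cls) : Commute (v (.inl 3)) (zz v α) := by
  have key : ∀ α β, Relation.EqvGen D.Step α β →
      (Commute (v (.inl 3)) (zz v α) ↔ Commute (v (.inl 3)) (zz v β)) := by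
    intro α β h
    induction h with
    | rel α β h =>
      obtain ⟨j, w, rfl, rfl⟩ := h
      have hs : Commute (v (.inr (.inr j))) (v (.inl 3)) :=
        commutatorElement_eq_one_iff_commute.1 (hv (.inr (.inr (.inr (.inr (.inl j))))))
      rw [← D.conj_zz hv]
      conv_rhs => rw [← mul_inv_eq_iff_eq_mul.2 hs.eq]
      exact (Commute.conj_iff _).symm
    | refl => rfl
    | symm _ _ _ ih => exact ih.symm
    | trans _ _ _ _ _ ih1 ih2 => exact ih1.trans ih2
  exact (key _ _ hα).1 (commutatorElement_eq_one_iff_commute.1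
    (hv (.inr (.inr (.inr (.inr (.inr 4)))))))

theorem zz_single [DecidableEq ι] (k : ℕ) : zz v (Pi.single D.i0 k) =
    ⁅v (.inl 0), v (.inl 2) ^ k * v (.inl 1) * (v (.inl 2) ^ k)⁻¹⁆ := by
  have h0 : Commute (v (.inr (.inl D.i0))) (v (.inl 0)) :=
    commutatorElement_eq_one_iff_commute.1 (hv (.inr (.inr (.inr (.inr (.inr 0))))))
  have h1 : Commute (v (.inr (.inl D.i0))) (v (.inl 2)) :=
    commutatorElement_eq_one_iff_commute.1 (hv (.inr (.inr (.inr (.inr (.inr 1))))))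
  have h2 : v (.inr (.inl D.i0)) * v (.inl 1) * (v (.inr (.inl D.i0)))⁻¹ =
      v (.inl 2) * v (.inl 1) * (v (.inl 2))⁻¹ :=
    mul_inv_eq_one.1 (hv (.inr (.inr (.inr (.inr (.inr 2))))))
  simp only [zz]
  rw [xp_single, zpow_natCast, ← MulAut.conj_apply, map_commutatorElement]
  congr 1
  · rw [MulAut.conj_apply, (h0.pow_left k).eq, mul_inv_cancel_right]
  · rw [MulAut.conj_apply]
    induction k with
    | zero => simp
    | succ k ih =>
      have h3 := (h1.pow_right k).eq
      calc _ = v (.inr (.inl D.i0)) * (v (.inr (.inl D.i0)) ^ k * v (.inl 1) *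
            (v (.inr (.inl D.i0)) ^ k)⁻¹) * (v (.inr (.inl D.i0)))⁻¹ := by
            rw [pow_succ']; group
        _ = (v (.inr (.inl D.i0)) * v (.inl 2) ^ k) * v (.inl 1) *
            (v (.inr (.inl D.i0)) * v (.inl 2) ^ k)⁻¹ := by rw [ih]; group
        _ = v (.inl 2) ^ k * (v (.inr (.inl D.i0)) * v (.inl 1) * (v (.inr (.inl D.i0)))⁻¹) *
            (v (.inl 2) ^ k)⁻¹ := by rw [h3]; group
        _ = _ := by rw [h2, pow_succ]; group

/-- The test element of `k` is `⁅s, zz α⁆` for the vector `α` with entry `k` in coordinate `i0`. -/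
theorem test_eq_one [DecidableEq ι] {k : ℕ} (hk : Pi.single D.i0 (k : ℤ) ∈ D.cls) :
    test (fun t => v (.inl t)) k = 1 := by
  rw [test, ← D.zz_single hv]
  exact commutatorElement_eq_one_iff_commute.2 (D.commute_of_cls hv hk)

/-- The square of `⁅s, z⁆ = (s * z * s⁻¹) * z⁻¹` is trivial since `z = zz α` is a conjugate of
`⁅e, f⁆` lying in the subgroup generated by `e, f, d`, and so commutes with `s * z * s⁻¹`. -/
theorem test_sq [DecidableEq ι] (k : ℕ) : test (fun t => v (.inl t)) k ^ 2 = 1 := by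
  have hz : zz v (Pi.single D.i0 (k : ℤ)) ^ 2 = 1 := by
    have := hv (.inr (.inr (.inr (.inr (.inr 3)))))
    simp only [relator] at this
    simp only [zz]
    rw [← MulAut.conj_apply, ← map_pow, this, map_one]
  let C : Subgroup G := Subgroup.closure (Set.range fun p : Fin 3 => v (.inl p.castSucc))
  have hmem : zz v (Pi.single D.i0 (k : ℤ)) ∈ C := by
    have hg : ∀ p : Fin 3, v (.inl p.castSucc) ∈ C := fun p => Subgroup.subset_closure ⟨p, rfl⟩
    have h0 : v (.inl 0) ∈ C := hg 0
    have h1 : v (.inl 1) ∈ C := hg 1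
    have h2 : v (.inl 2) ∈ C := hg 2
    rw [D.zz_single hv, commutatorElement_def]
    have h3 := C.mul_mem (C.mul_mem (C.pow_mem h2 k) h1) (C.inv_mem (C.pow_mem h2 k))
    exact C.mul_mem (C.mul_mem (C.mul_mem h0 h3) (C.inv_mem h0)) (C.inv_mem h3)
  have hcomm : ∀ p ∈ C, ∀ q ∈ C, Commute p (v (.inl 3) * q * (v (.inl 3))⁻¹) := by
    have h1 : ∀ q : Fin 3, ∀ p ∈ C, Commute p (MulAut.conj (v (.inl 3)) (v (.inl q.castSucc))) := by
      intro q p hp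
      have : C ≤ Subgroup.centralizer {MulAut.conj (v (.inl 3)) (v (.inl q.castSucc))} := by
        rw [Subgroup.closure_le]
        rintro _ ⟨p, rfl⟩
        refine Subgroup.mem_centralizer_singleton_iff.2 ?_
        exact commutatorElement_eq_one_iff_mul_comm.1 (hv (.inr (.inl (p, q))))
      exact Subgroup.mem_centralizer_singleton_iff.1 (this hp)
    intro p hp q hq
    have : C ≤ (Subgroup.centralizer {p}).comap (MulAut.conj (v (.inl 3))).toMonoidHom := by
      rw [Subgroup.closure_le]
      rintro _ ⟨q, rfl⟩
      exact Subgroup.mem_centralizer_singleton_iff.2 (h1 q p hp).symm.eq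
    exact (Subgroup.mem_centralizer_singleton_iff.1 (this hq)).symm
  have h := hcomm _ hmem _ hmem
  rw [test, ← D.zz_single hv, commutatorElement_def, h.symm.inv_right.mul_pow, inv_pow, hz]
  rw [← MulAut.conj_apply, ← map_pow, hz]
  simp

end derive

end Affine

/-! ### A model detecting the class of the halting vector -/

namespace Mat
variable {ι : Type}

theorem exists_tw' (S U : Set (ι → ℤ)) (a : ι → ℤ) {m : ι → ℤ} (hm : ∀ i, m i ≠ 0)
    (hU : ∀ w, w ∈ U ↔ a + m * w ∈ S) :
    ∃ F : (sd U).M →* (sd S).M, Function.Injective F ∧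
      (∀ x, F ((sd U).κ x) = (sd S).κ (tw a m x)) ∧ F (sd U).s = (sd S).s := by
  obtain rfl : U = {w | a + m * w ∈ S} := Set.ext hU
  exact exists_tw S a hm

/-- The diagonal matrices with last entry `-w`. -/
noncomputable def diag (ι : Type) : Multiplicative (ι → ℤ) →* Mat ι where
  toFun w := ⟨0, 0, 0, 0, -w.toAdd⟩
  map_one' := by simp [one_def]
  map_mul' a b := by simp [mul_def, add_comm]

end Mat

namespace Affine
variable {ι J : Type} [Fintype ι] [DecidableEq ι]

/-- The images in the matrix group of the generators other than `s` and the `ρ j`. -/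
noncomputable def base (D : Affine ι J) : Gen ι J → Mat ι
  | .inl t => match t with
    | 0 => ⟨1, 0, 0, 0, 0⟩
    | 1 => ⟨0, 1, 0, 0, 0⟩
    | 2 => ⟨0, 0, 0, Pi.single D.i0 1, 0⟩
    | 3 => 1
  | .inr (.inl i) => ⟨0, 0, 0, 0, -Pi.single i 1⟩
  | .inr (.inr _) => 1

theorem zz_base (D : Affine ι J) (α : ι → ℤ) : zz D.base α = ⟨0, 0, dl α, 0, 0⟩ := by
  have hx : xp (fun i => D.base (.inr (.inl i))) α = ⟨0, 0, 0, 0, -α⟩ :=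
    map_xp_hom (Mat.diag ι) α
  simp only [zz, hx]
  simp [base, commutatorElement_def, Mat.mul_def, Mat.inv_def, dl_zero]

/-- A group satisfying the relators in which the test elements outside the class survive. The
element `zz α` is the elementary matrix with corner entry `dl α`, and commutes with the swap exactly
for `α` in the class. The amalgam over the preimage of the class embeds in the one over the class
through either side of rule `j`, since the two sides have the same preimage, and `ρ j` conjugates
one embedding to the other. -/
theorem exists_model (D : Affine ι J) : ∃ (Γ : Type) (_ : Group Γ) (v : Gen ι J → Γ),
    (∀ r, D.relator v r = 1) ∧
      ∀ k : ℕ, test (fun t => v (.inl t)) k = 1 → Pi.single D.i0 (k : ℤ) ∈ D.cls := by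
  let S := D.cls
  choose P hP hPκ hPs using fun j => Mat.exists_tw' S {w | D.a j + D.m j * w ∈ S} (D.a j) (D.hm j)
    (fun w => Iff.rfl)
  choose Q hQ hQκ hQs using fun j => Mat.exists_tw' S {w | D.a j + D.m j * w ∈ S} (D.b j) (D.hn j)
    (fun w => D.cls_iff j w)
  obtain ⟨Γ, _, e, t, he, ht⟩ := exists_conj_overgroup _ _ P Q hP hQ
  let E : Mat ι →* Γ := e.comp (Mat.sd S).κ
  let v : Gen ι J → Γ := fun g => match g with
    | .inl 0 => E (D.base (.inl 0))
    | .inl 1 => E (D.base (.inl 1))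
    | .inl 2 => E (D.base (.inl 2))
    | .inl 3 => e (Mat.sd S).s
    | .inr (.inl i) => E (D.base (.inr (.inl i)))
    | .inr (.inr j) => t j
  have hzz : ∀ α, zz v α = E ⟨0, 0, dl α, 0, 0⟩ := by
    intro α
    rw [← D.zz_base, map_zz]
    rfl
  have hv3 : ∀ p : Fin 3, ∃ q : (Mat.sd S).P, D.base (.inl p.castSucc) = q ∧
      v (.inl p.castSucc) = E q := by
    intro p
    fin_cases p
    · exact ⟨⟨D.base (.inl 0), rfl⟩, rfl, rfl⟩
    · exact ⟨⟨D.base (.inl 1), rfl⟩, rfl, rfl⟩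
    · exact ⟨⟨D.base (.inl 2), rfl⟩, rfl, rfl⟩
  have hcz : ∀ α, Commute (v (.inl 3)) (zz v α) ↔ α ∈ S := by
    intro α
    rw [hzz]
    let q : (Mat.sd S).P := ⟨⟨0, 0, dl α, 0, 0⟩, rfl⟩
    have h1 : Commute (v (.inl 3)) (E q) ↔ Commute (Mat.sd S).s ((Mat.sd S).κ q) :=
      ⟨fun h => he (by rw [map_mul, map_mul]; exact h.eq), fun h => h.map e⟩
    refine h1.trans ((Mat.sd S).commute_s_iff q |>.trans ?_)
    rw [← suppIn_dl S α]
    exact ⟨fun h => h.2.2.2, fun h => ⟨rfl, rfl, rfl, h⟩⟩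
  have hrel : ∀ r, D.relator v r = 1 := by
    rintro (⟨i, l⟩ | ⟨p, q⟩ | ⟨j, i⟩ | j | j | r)
    · rw [relator, commutatorElement_eq_one_iff_commute]
      refine Commute.map (f := E) ?_
      simp [commute_iff_eq, base, Mat.mul_def, add_comm]
    · obtain ⟨p', -, hp⟩ := hv3 p
      obtain ⟨q', -, hq⟩ := hv3 q
      rw [relator, commutatorElement_eq_one_iff_commute, hp, hq]
      have := ((Mat.sd S).commute_s_conj p' q').map e
      rw [map_mul, map_mul, map_inv] at this
      exact this
    · rw [relator, mul_inv_eq_one]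
      have hx : ∀ k : ℤ, v (.inr (.inl i)) ^ k = E ⟨0, 0, 0, 0, -Pi.single i k⟩ := by
        intro k
        have h1 : v (.inr (.inl i)) = E (Mat.diag ι (.ofAdd (Pi.single i 1))) := rfl
        rw [h1, ← map_zpow, ← map_zpow, ← ofAdd_zsmul, ← Pi.single_smul]
        simp [Mat.diag]
      have hm : ∀ (a : ι → ℤ) (m : ι → ℤ), Mat.tw a m ⟨0, 0, 0, 0, -Pi.single i 1⟩ =
          ⟨0, 0, 0, 0, -Pi.single i (m i)⟩ := by
        intro a m
        simp only [Mat.tw_apply, Mat.mk.injEq, map_zero, zero_mul, mul_zero, true_and]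
        funext l
        by_cases h : l = i
        · subst h; simp
        · simp [h]
      rw [hx, hx, ← hm (D.a j), ← hm (D.b j)]
      change t j * e _ * (t j)⁻¹ = e _
      rw [← hPκ, ← hQκ]
      exact ht j _
    · rw [relator, mul_inv_eq_one, hzz, hzz]
      have hm : ∀ (a : ι → ℤ) (m : ι → ℤ), Mat.tw a m ⟨0, 0, 1, 0, 0⟩ = ⟨0, 0, dl a, 0, 0⟩ := by
        intro a m
        simp [Mat.tw_apply]
      rw [← hm (D.a j) (D.m j), ← hm (D.b j) (D.n j)]
      change t j * e _ * (t j)⁻¹ = e _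
      rw [← hPκ, ← hQκ]
      exact ht j _
    · rw [relator, commutatorElement_eq_one_iff_commute, commute_iff_eq, ← mul_inv_eq_iff_eq_mul]
      have := ht j (Mat.sd _).s
      rwa [hPs, hQs] at this
    · fin_cases r
      · refine commutatorElement_eq_one_iff_commute.2 (Commute.map (f := E) ?_)
        simp [commute_iff_eq, base, Mat.mul_def, dl_zero]
      · refine commutatorElement_eq_one_iff_commute.2 (Commute.map (f := E) ?_)
        simp [commute_iff_eq, base, Mat.mul_def]
      · refine mul_inv_eq_one.2 ?_
        change E _ * E _ * (E _)⁻¹ = E _ * E _ * (E _)⁻¹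
        rw [← map_inv, ← map_inv, ← map_mul, ← map_mul, ← map_mul, ← map_mul]
        congr 1
        simp [base, Mat.mul_def, Mat.inv_def, dl_zero]
      · change ⁅E _, E _⁆ ^ 2 = 1
        rw [← map_commutatorElement, ← map_pow]
        refine (congrArg E ?_).trans (map_one E)
        have h2 : (1 : LA ι) + 1 = 0 := by
          rw [← dl_zero, dl, ← AddMonoidAlgebra.single_add,
            show (1 : ZMod 2) + 1 = 0 from rfl, AddMonoidAlgebra.single_zero]
        simp [base, commutatorElement_def, Mat.mul_def, Mat.inv_def, dl_zero, pow_two, Mat.one_def,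
          h2]
      · exact commutatorElement_eq_one_iff_commute.2 ((hcz _).2 (.refl _))
  refine ⟨Γ, _, v, hrel, fun k hk => ?_⟩
  rw [test, ← D.zz_single hrel, commutatorElement_eq_one_iff_commute] at hk
  exact (hcz _).1 hk

end Affine

/-! ### Stack machines as affine rules -/

/-- A stack operation. -/
inductive Op (Γ : Type)
  | keep
  | pop
  | push (g : Γ)

/-- The effect of a stack operation; popping the empty stack does nothing. -/
def Op.act {Γ : Type} : Op Γ → List Γ → List Γ
  | .keep, l => l
  | .pop, l => l.tail
  | .push g, l => g :: l

/-- A deterministic machine with stacks indexed by `K`.  Each transition reads the tops of all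
stacks; in the halting state all stacks are popped forever. -/
structure StackMachine (Q K Γ : Type) where
  halt : Q
  next : Q → (K → Option Γ) → Q
  op : Q → (K → Option Γ) → K → Op Γ
  next_halt : ∀ τ, next halt τ = halt
  op_halt : ∀ τ k, op halt τ k = .pop

namespace StackMachine
variable {Q K Γ : Type}

/-- One step of the machine. -/
def step (m : StackMachine Q K Γ) (c : Q × (K → List Γ)) : Q × (K → List Γ) :=
  (m.next c.1 fun k => (c.2 k).head?, fun k => (m.op c.1 fun k => (c.2 k).head?) k |>.act (c.2 k))

/-- The final configuration. -/
def final (m : StackMachine Q K Γ) : Q × (K → List Γ) := (m.halt, fun _ => [])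

theorem step_final (m : StackMachine Q K Γ) : m.step m.final = m.final := by
  simp [step, final, m.next_halt, m.op_halt, Op.act]

/-- A numbering of states and of stack letters; the digit `0` is reserved for an empty stack. -/
structure Coding (Q Γ : Type) where
  M : ℕ
  B : ℕ
  code : Q → Fin M
  dig : Option Γ → Fin B
  code_inj : Function.Injective code
  dig_inj : Function.Injective dig
  dig_none : (dig none : ℕ) = 0

/-- A stack read as a number in base `B`, the top being the least significant digit. -/
def Coding.val (C : Coding Q Γ) : List Γ → ℕ
  | [] => 0
  | g :: l => C.dig (some g) + C.B * C.val l

/-- The vector of a configuration. -/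
def Coding.enc (C : Coding Q Γ) (c : Q × (K → List Γ)) : Option K → ℤ
  | none => ((C.code c.1 : ℕ) : ℤ)
  | some k => (C.val (c.2 k) : ℤ)

theorem fin_add_mul_inj {B : ℕ} {r r' : Fin B} {w w' : ℤ}
    (h : ((r : ℕ) : ℤ) + B * w = ((r' : ℕ) : ℤ) + B * w') : r = r' ∧ w = w' := by
  have h1 : ∀ r : Fin B, ∀ w : ℤ, (((r : ℕ) : ℤ) + B * w) % B = ((r : ℕ) : ℤ) := by
    intro r w
    rw [Int.add_mul_emod_self_left]
    exact Int.emod_eq_of_lt (by positivity) (by exact_mod_cast r.2)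
  have h2 : ((r : ℕ) : ℤ) = ((r' : ℕ) : ℤ) := by rw [← h1 r w, h, h1]
  have hr : r = r' := Fin.ext (by exact_mod_cast h2)
  refine ⟨hr, ?_⟩
  subst hr
  have hB : (B : ℤ) ≠ 0 := by
    have := r.2
    have : B ≠ 0 := by rintro rfl; exact absurd r.2 (Nat.not_lt_zero _)
    exact_mod_cast this
  exact mul_left_cancel₀ hB (by linarith)

namespace Coding
variable (C : Coding Q Γ)

theorem dig_some_ne (g : Γ) : (C.dig (some g) : ℕ) ≠ 0 := by
  intro h
  have := C.dig_inj (Fin.ext (h.trans C.dig_none.symm))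
  cases this

theorem val_injective : Function.Injective C.val := by
  intro l
  induction l with
  | nil =>
    rintro (_ | ⟨g, l⟩) h
    · rfl
    · simp only [val] at h
      exact absurd (Nat.eq_zero_of_add_eq_zero_right h.symm) (C.dig_some_ne g)
  | cons g l ih =>
    rintro (_ | ⟨g', l'⟩) h
    · simp only [val] at h
      exact absurd (Nat.eq_zero_of_add_eq_zero_right h) (C.dig_some_ne g)
    · simp only [val] at h
      obtain ⟨h1, h2⟩ := fin_add_mul_inj (r := C.dig (some g)) (r' := C.dig (some g'))
        (w := C.val l) (w' := C.val l') (by exact_mod_cast h)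
      rw [Option.some_injective _ (C.dig_inj h1), ih (by exact_mod_cast h2)]

theorem enc_injective : Function.Injective (C.enc (K := K)) := by
  rintro ⟨q, S⟩ ⟨q', S'⟩ h
  have h1 : ((C.code q : ℕ) : ℤ) = ((C.code q' : ℕ) : ℤ) := congrFun h none
  have h2 : ∀ k, (C.val (S k) : ℤ) = (C.val (S' k) : ℤ) := fun k => congrFun h (some k)
  refine Prod.ext (C.code_inj (Fin.ext (by exact_mod_cast h1))) (funext fun k => ?_)
  exact C.val_injective (by exact_mod_cast h2 k)

theorem pos_M (q : Q) : (C.M : ℤ) ≠ 0 := by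
  have : C.M ≠ 0 := by have := (C.code q).2; omega
  exact_mod_cast this

theorem pos_B : (C.B : ℤ) ≠ 0 := by
  have : C.B ≠ 0 := by have := (C.dig none).2; omega
  exact_mod_cast this

/-- The offset and slope after an operation on a stack with top `t`. -/
def res (t : Option Γ) : Op Γ → ℤ × ℤ
  | .keep => ((C.dig t : ℕ), C.B)
  | .pop => match t with
    | none => (0, C.B)
    | some _ => (0, 1)
  | .push g => ((C.dig (some g) : ℕ) + C.B * (C.dig t : ℕ), C.B * C.B)

theorem res_ne (t : Option Γ) (o : Op Γ) : (C.res t o).2 ≠ 0 := by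
  have := C.pos_B
  rcases o with _ | _ | g
  · simpa [res]
  · cases t
    · simpa [res]
    · simp [res]
  · simpa [res]

/-- The affine rules of a machine: one for each state and choice of stack tops. -/
def affine (m : StackMachine Q K Γ) (k0 : K) : Affine (Option K) (Q × (K → Option Γ)) where
  a j
    | none => ((C.code j.1 : ℕ) : ℤ)
    | some k => ((C.dig (j.2 k) : ℕ) : ℤ)
  b j
    | none => ((C.code (m.next j.1 j.2) : ℕ) : ℤ)
    | some k => (C.res (j.2 k) (m.op j.1 j.2 k)).1
  m _
    | none => C.M
    | some _ => C.B
  n j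
    | none => C.M
    | some k => (C.res (j.2 k) (m.op j.1 j.2 k)).2
  hm := by
    rintro ⟨q, τ⟩ (_ | k)
    · exact C.pos_M q
    · exact C.pos_B
  hn := by
    rintro ⟨q, τ⟩ (_ | k)
    · exact C.pos_M q
    · exact C.res_ne _ _
  h := C.enc m.final
  i0 := some k0

variable (m : StackMachine Q K Γ) (k0 : K)

theorem step_unique {α β β' : Option K → ℤ} (h : (C.affine m k0).Step α β)
    (h' : (C.affine m k0).Step α β') : β = β' := by
  obtain ⟨⟨q, τ⟩, w, h1, h2⟩ := h
  obtain ⟨⟨q', τ'⟩, w', h1', h2'⟩ := h'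
  have hα := h1.symm.trans h1'
  have hq := fin_add_mul_inj (show ((C.code q : ℕ) : ℤ) + C.M * w none =
    ((C.code q' : ℕ) : ℤ) + C.M * w' none from congrFun hα none)
  have hk := fun k => fin_add_mul_inj (show ((C.dig (τ k) : ℕ) : ℤ) + C.B * w (some k) =
    ((C.dig (τ' k) : ℕ) : ℤ) + C.B * w' (some k) from congrFun hα (some k))
  obtain rfl : q = q' := C.code_inj hq.1
  obtain rfl : τ = τ' := funext fun k => C.dig_inj (hk k).1
  obtain rfl : w = w' := by
    funext i
    cases i with
    | none => exact hq.2
    | some k => exact (hk k).2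
  exact h2.trans h2'.symm

theorem step_enc (c : Q × (K → List Γ)) :
    (C.affine m k0).Step (C.enc c) (C.enc (m.step c)) := by
  obtain ⟨q, S⟩ := c
  refine ⟨(q, fun k => (S k).head?), fun i => match i with
    | none => 0
    | some k => C.val (S k).tail, ?_, ?_⟩
  · funext i
    cases i with
    | none => simp [enc, affine]
    | some k =>
      change (C.val (S k) : ℤ) = ((C.dig (S k).head? : ℕ) : ℤ) + C.B * C.val (S k).tail
      cases S k with
      | nil => simp [val, C.dig_none]
      | cons g l => simp [val]
  · funext i
    cases i with
    | none => simp [enc, affine, step]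
    | some k =>
      change (C.val ((m.op q fun k => (S k).head?) k |>.act (S k)) : ℤ) =
        (C.res (S k).head? ((m.op q fun k => (S k).head?) k)).1 +
          (C.res (S k).head? ((m.op q fun k => (S k).head?) k)).2 * C.val (S k).tail
      cases ((m.op q fun k => (S k).head?) k) with
      | keep =>
        cases S k with
        | nil => simp [val, C.dig_none, Op.act, res]
        | cons g l => simp [val, Op.act, res]
      | pop =>
        cases S k with
        | nil => simp [val, Op.act, res]
        | cons g l => simp [Op.act, res]
      | push g =>
        cases S k with
        | nil => simp [val, C.dig_none, Op.act, res]
        | cons g l => simp [val, Op.act, res]; ring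

/-- Since the rules are deterministic on vectors and fix the halting vector, the equivalence class
of the latter consists of the vectors that reach it. -/
theorem mem_cls_iff (α : Option K → ℤ) : α ∈ (C.affine m k0).cls ↔
    Relation.ReflTransGen (C.affine m k0).Step α (C.enc m.final) := by
  have hh : (C.affine m k0).Step (C.enc m.final) (C.enc m.final) := by
    simpa only [m.step_final] using C.step_enc m k0 m.final
  have key : ∀ α β, Relation.EqvGen (C.affine m k0).Step α β →
      (Relation.ReflTransGen (C.affine m k0).Step α (C.enc m.final) ↔
        Relation.ReflTransGen (C.affine m k0).Step β (C.enc m.final)) := by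
    intro α β h
    induction h with
    | rel α β h =>
      refine ⟨fun hα => ?_, fun hβ => .head h hβ⟩
      rcases Relation.ReflTransGen.cases_head hα with rfl | ⟨γ, h1, h2⟩
      · rw [C.step_unique m k0 h hh]
      · rwa [C.step_unique m k0 h h1]
    | refl => rfl
    | symm _ _ _ ih => exact ih.symm
    | trans _ _ _ _ _ ih1 ih2 => exact ih1.trans ih2
  refine ⟨fun h => (key _ _ h).1 .refl, fun h => ?_⟩
  refine Relation.EqvGen.symm _ _ ?_
  induction h using Relation.ReflTransGen.head_induction_on with
  | refl => exact .refl _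
  | head h _ ih => exact .trans _ _ _ (.rel _ _ h) ih

theorem enc_mem_cls_iff (c : Q × (K → List Γ)) :
    C.enc c ∈ (C.affine m k0).cls ↔ ∃ n, m.step^[n] c = m.final := by
  rw [mem_cls_iff]
  constructor
  · intro h
    generalize hx : C.enc c = x at h
    induction h using Relation.ReflTransGen.head_induction_on generalizing c with
    | refl => exact ⟨0, C.enc_injective hx⟩
    | head h _ ih =>
      subst hx
      obtain ⟨n, hn⟩ := ih (m.step c) (C.step_unique m k0 (C.step_enc m k0 c) h)
      exact ⟨n + 1, hn⟩
  · rintro ⟨n, hn⟩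
    induction n generalizing c with
    | zero =>
      obtain rfl : c = m.final := hn
      exact .refl
    | succ n ih => exact .head (C.step_enc m k0 c) (ih _ hn)

end Coding

/-- Every finite machine has a coding giving code `0` to a prescribed state. -/
theorem exists_coding [Fintype Q] [Fintype Γ] (q0 : Q) :
    ∃ C : Coding Q Γ, (C.code q0 : ℕ) = 0 := by
  classical
  have : NeZero (Fintype.card Q) := ⟨(Fintype.card_pos_iff.2 ⟨q0⟩).ne'⟩
  let e : Q ≃ Fin (Fintype.card Q) :=
    (Fintype.equivFin Q).trans (Equiv.swap (Fintype.equivFin Q q0) 0)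
  let d : Option Γ ≃ Fin (Fintype.card Γ + 1) :=
    (Fintype.equivFin Γ).optionCongr.trans (finSuccEquiv _).symm
  exact ⟨⟨_, _, e, d, e.injective, d.injective, by simp [d]⟩, by simp [e]⟩

/-- Restriction to a set of states closed under transitions. -/
def restrict (m : StackMachine Q K Γ) (X : Set Q) (hX : ∀ q ∈ X, ∀ τ, m.next q τ ∈ X)
    (hh : m.halt ∈ X) : StackMachine X K Γ where
  halt := ⟨m.halt, hh⟩
  next q τ := ⟨m.next q τ, hX q q.2 τ⟩
  op q τ := m.op q τ
  next_halt τ := Subtype.ext (m.next_halt τ)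
  op_halt τ k := m.op_halt τ k

theorem restrict_reaches (m : StackMachine Q K Γ) (X : Set Q)
    (hX : ∀ q ∈ X, ∀ τ, m.next q τ ∈ X) (hh : m.halt ∈ X) (c : X × (K → List Γ)) (n : ℕ) :
    (m.restrict X hX hh).step^[n] c = (m.restrict X hX hh).final ↔
      m.step^[n] (c.1, c.2) = m.final := by
  induction n generalizing c with
  | zero =>
    obtain ⟨⟨q, hq⟩, S⟩ := c
    simp [restrict, final]
  | succ n ih => exact ih _

end StackMachine

/-! ### Halting of stack machines -/

section TM2
open Turing

variable {K Γ Λ σ : Type} [DecidableEq K]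

/-- Statements of stack machines over a fixed alphabet. -/
abbrev Stm (K Γ Λ σ : Type) := TM2.Stmt (fun _ : K => Γ) Λ σ

/-- The next state; `none` is the halting state. -/
def nextSt (M : Λ → Stm K Γ Λ σ) : Stm K Γ Λ σ → σ → (K → Option Γ) → Option (Stm K Γ Λ σ × σ)
  | .push _ _ q, v, _ => some (q, v)
  | .peek k f q, v, τ => some (q, f v (τ k))
  | .pop k f q, v, τ => some (q, f v (τ k))
  | .load a q, v, _ => some (q, a v)
  | .branch f q₁ q₂, v, _ => some (cond (f v) q₁ q₂, v)
  | .goto l, v, _ => some (M (l v), v)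
  | .halt, _, _ => none

/-- The stack operation performed by a statement. -/
def opSt : Stm K Γ Λ σ → σ → K → Op Γ
  | .push k f _, v => Function.update (fun _ => .keep) k (.push (f v))
  | .pop k _ _, _ => Function.update (fun _ => .keep) k .pop
  | _, _ => fun _ => .keep

/-- The stack machine performing the statements one at a time, which clears its stacks after
halting. -/
def toSM (M : Λ → Stm K Γ Λ σ) : StackMachine (Option (Stm K Γ Λ σ × σ)) K Γ where
  halt := none
  next
    | none, _ => none
    | some (q, v), τ => nextSt M q v τ
  op
    | none, _ => fun _ => .pop
    | some (q, v), _ => opSt q v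
  next_halt _ := rfl
  op_halt _ _ := rfl

/-- The translation of configurations. -/
def toCfg (M : Λ → Stm K Γ Λ σ) :
    TM2.Cfg (fun _ : K => Γ) Λ σ → Option (Stm K Γ Λ σ × σ) × (K → List Γ)
  | ⟨none, _, S⟩ => (none, S)
  | ⟨some l, v, S⟩ => (some (M l, v), S)

theorem stepAux_reaches (M : Λ → Stm K Γ Λ σ) (q : Stm K Γ Λ σ) (v : σ) (S : K → List Γ) :
    ∃ n, (toSM M).step^[n + 1] (some (q, v), S) = toCfg M (TM2.stepAux q v S) := by
  have hkeep : ∀ S : K → List Γ, (fun k => Op.act (.keep : Op Γ) (S k)) = S := fun S => rfl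
  have hup : ∀ (S : K → List Γ) (k : K) (o : Op Γ),
      (fun k' => (Function.update (fun _ => .keep) k o : K → Op Γ) k' |>.act (S k')) =
        Function.update S k (o.act (S k)) := by
    intro S k o
    funext k'
    by_cases h : k' = k
    · subst h; simp
    · simp [h, Op.act]
  induction q generalizing v S with
  | push k f q ih =>
    obtain ⟨n, hn⟩ := ih v (Function.update S k (f v :: S k))
    refine ⟨n + 1, ?_⟩
    rw [Function.iterate_succ_apply, TM2.stepAux, ← hn]
    congr 1
    exact Prod.ext rfl (hup S k _)
  | peek k f q ih =>
    obtain ⟨n, hn⟩ := ih (f v (S k).head?) S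
    exact ⟨n + 1, hn⟩
  | pop k f q ih =>
    obtain ⟨n, hn⟩ := ih (f v (S k).head?) (Function.update S k (S k).tail)
    refine ⟨n + 1, ?_⟩
    rw [Function.iterate_succ_apply, TM2.stepAux, ← hn]
    congr 1
    exact Prod.ext rfl (hup S k _)
  | load a q ih =>
    obtain ⟨n, hn⟩ := ih (a v) S
    exact ⟨n + 1, hn⟩
  | branch f q₁ q₂ ih₁ ih₂ =>
    cases h : f v with
    | true =>
      obtain ⟨n, hn⟩ := ih₁ v S
      refine ⟨n + 1, ?_⟩
      rw [Function.iterate_succ_apply, TM2.stepAux, h, cond_true, ← hn]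
      congr 1
      simp only [StackMachine.step, toSM, nextSt, h, cond_true]
      rfl
    | false =>
      obtain ⟨n, hn⟩ := ih₂ v S
      refine ⟨n + 1, ?_⟩
      rw [Function.iterate_succ_apply, TM2.stepAux, h, cond_false, ← hn]
      congr 1
      simp only [StackMachine.step, toSM, nextSt, h, cond_false]
      rfl
  | goto l => exact ⟨0, rfl⟩
  | halt => exact ⟨0, rfl⟩

theorem clear_reaches [Finite K] (M : Λ → Stm K Γ Λ σ) (S : K → List Γ) :
    ∃ n, (toSM M).step^[n] (none, S) = (toSM M).final := by
  have h : ∀ n, (toSM M).step^[n] (none, S) = (none, fun k => (S k).drop n) := by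
    intro n
    induction n with
    | zero => rfl
    | succ n ih =>
      rw [Function.iterate_succ_apply', ih]
      refine Prod.ext rfl (funext fun k => ?_)
      change ((S k).drop n).tail = _
      rw [List.tail_drop]
  obtain ⟨N, hN⟩ := (Set.finite_range fun k => (S k).length).bddAbove
  refine ⟨N, ?_⟩
  rw [h]
  refine Prod.ext rfl (funext fun k => ?_)
  exact List.drop_eq_nil_of_le (hN ⟨k, rfl⟩)

theorem eval_dom_iff [Finite K] (M : Λ → Stm K Γ Λ σ) (c : TM2.Cfg (fun _ : K => Γ) Λ σ) :
    (StateTransition.eval (TM2.step M) c).Dom ↔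
      ∃ n, (toSM M).step^[n] (toCfg M c) = (toSM M).final := by
  constructor
  · intro h
    obtain ⟨b, hb⟩ := Part.dom_iff_mem.1 h
    obtain ⟨h1, h2⟩ := StateTransition.mem_eval.1 hb
    clear hb h
    induction h1 using Relation.ReflTransGen.head_induction_on with
    | refl =>
      obtain ⟨_ | l, v, S⟩ := b
      · exact clear_reaches M S
      · cases h2
    | @head a c h _ ih =>
      obtain ⟨_ | l, v, S⟩ := a
      · cases h
      · obtain rfl : TM2.stepAux (M l) v S = c := Option.some_injective _ h
        obtain ⟨n, hn⟩ := ih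
        obtain ⟨k, hk⟩ := stepAux_reaches M (M l) v S
        refine ⟨n + (k + 1), ?_⟩
        rw [Function.iterate_add_apply]
        change (toSM M).step^[n] ((toSM M).step^[k + 1] (some (M l, v), S)) = _
        rw [hk, hn]
  · rintro ⟨n, hn⟩
    induction n using Nat.strong_induction_on generalizing c with
    | _ n ih =>
      obtain ⟨_ | l, v, S⟩ := c
      · exact Part.dom_iff_mem.2 ⟨_, StateTransition.mem_eval.2 ⟨.refl, rfl⟩⟩
      · obtain ⟨k, hk⟩ := stepAux_reaches M (M l) v S
        have hstep : StateTransition.Reaches (TM2.step M) ⟨some l, v, S⟩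
          (TM2.stepAux (M l) v S) := .single rfl
        rw [StateTransition.reaches_eval hstep]
        have hfix : ∀ i, (toSM M).step^[i] (toSM M).final = (toSM M).final := fun i =>
          Function.iterate_fixed (toSM M).step_final i
        have hn0 : n ≠ 0 := by
          rintro rfl
          cases congrArg Prod.fst hn
        by_cases hlt : k + 1 ≤ n
        · refine ih (n - (k + 1)) (by omega) _ ?_
          rw [← hk, ← Function.iterate_add_apply, Nat.sub_add_cancel hlt]
          exact hn
        · refine ih 0 (by omega) _ ?_
          rw [Function.iterate_zero_apply, ← hk, show k + 1 = (k + 1 - n) + n by omega,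
            Function.iterate_add_apply]
          exact (congrArg _ hn).trans (hfix _)

/-- The states formed from statements occurring in the part of the program supported by `S`. -/
def states (M : Λ → Stm K Γ Λ σ) (S : Finset Λ) : Set (Option (Stm K Γ Λ σ × σ)) :=
  {x | ∀ p ∈ x, some p.1 ∈ TM2.stmts M S}

theorem states_finite [Finite σ] (M : Λ → Stm K Γ Λ σ) (S : Finset Λ) :
    (states M S).Finite := by
  have h : {p : Stm K Γ Λ σ × σ | some p.1 ∈ TM2.stmts M S}.Finite := by
    have := ((TM2.stmts M S).finite_toSet.preimage (Option.some_injective _).injOn).prod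
      (Set.finite_univ (α := σ))
    refine this.subset fun p hp => ⟨hp, trivial⟩
  refine ((h.image some).insert none).subset ?_
  rintro (_ | p) hp
  · exact Or.inl rfl
  · exact Or.inr ⟨p, hp p rfl, rfl⟩

theorem states_closed [Inhabited Λ] (M : Λ → Stm K Γ Λ σ) (S : Finset Λ)
    (hS : TM2.Supports M S) : ∀ x ∈ states M S, ∀ τ, (toSM M).next x τ ∈ states M S := by
  classical
  rintro (_ | ⟨q, v⟩) hq τ
  · exact hq
  have hq' : some q ∈ TM2.stmts M S := hq _ rfl
  have hsub := fun q' (h : q' ∈ TM2.stmts₁ q) => TM2.stmts_trans h hq'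
  have hself : ∀ q : Stm K Γ Λ σ, q ∈ TM2.stmts₁ q := fun q => TM2.stmts₁_self
  cases q with
  | push k f q =>
    rintro _ ⟨⟩
    exact hsub q (by simp [TM2.stmts₁, hself])
  | peek k f q =>
    rintro _ ⟨⟩
    exact hsub q (by simp [TM2.stmts₁, hself])
  | pop k f q =>
    rintro _ ⟨⟩
    exact hsub q (by simp [TM2.stmts₁, hself])
  | load a q =>
    rintro _ ⟨⟩
    exact hsub q (by simp [TM2.stmts₁, hself])
  | branch f q₁ q₂ =>
    rintro _ ⟨⟩
    refine hsub _ ?_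
    cases h : f v <;> simp [TM2.stmts₁, hself]
  | goto l =>
    rintro _ ⟨⟩
    have := TM2.stmts_supportsStmt hS hq' v
    simp only [TM2.stmts, Finset.some_mem_insertNone, Finset.mem_biUnion]
    exact ⟨_, this, hself _⟩
  | halt => rintro _ ⟨⟩

end TM2

/-! ### An affine system with unsolvable reachability -/

section Machine
open Turing Turing.PartrecToTM2
open StackMachine (Coding exists_coding)

instance : Fintype K' :=
  ⟨{.main, .rev, .aux, .stack}, fun k => by cases k <;> simp⟩

/-- Mathlib's stack code of a number lists its binary digits, least significant first. -/
theorem trNat_double_add (b : Bool) (m : ℕ) (h : Nat.bit b m ≠ 0) :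
    trNat (Nat.bit b m) = cond b Γ'.bit1 Γ'.bit0 :: trNat m := by
  unfold trNat
  rw [← Num.ofNat'_eq, ← Num.ofNat'_eq, Num.ofNat'_bit]
  cases b with
  | true => cases Num.ofNat' m <;> rfl
  | false =>
    have hm : Num.ofNat' m ≠ 0 := by
      rw [Num.ofNat'_eq]
      intro h0
      refine h ?_
      have : m = 0 := by exact_mod_cast congrArg (fun n : Num => (n : ℕ)) h0
      simp [this, Nat.bit]
    cases h' : Num.ofNat' m with
    | zero => exact absurd h' hm
    | pos p => rfl

/-- The value of the stack holding the input `r`. -/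
def inputVal {Q : Type} (C : Coding Q Γ') (r : ℕ) : ℕ := C.val (trList [r])

theorem inputVal_zero {Q : Type} (C : Coding Q Γ') :
    inputVal C 0 = C.dig (some Γ'.cons) := by
  simp [inputVal, trList, Coding.val]

theorem inputVal_pos {Q : Type} (C : Coding Q Γ') (r : ℕ) (h : r ≠ 0) :
    inputVal C r = (if r % 2 = 0 then (C.dig (some Γ'.bit0) : ℕ) else C.dig (some Γ'.bit1)) +
      C.B * inputVal C (r / 2) := by
  have h1 : Nat.bit (r % 2 = 1) (r / 2) = r := by
    rcases Nat.mod_two_eq_zero_or_one r with h | h <;> simp [Nat.bit, h] <;> omega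
  have h2 := trNat_double_add (r % 2 = 1) (r / 2) (by rwa [h1])
  rw [h1] at h2
  rw [inputVal, trList, h2, List.cons_append, Coding.val]
  rcases Nat.mod_two_eq_zero_or_one r with h | h <;> simp [h, inputVal, trList]

theorem inputVal_primrec {Q : Type} (C : Coding Q Γ') : Primrec (inputVal C) := by
  have hrec : Primrec₂ fun (_ : Unit) r => inputVal C r := by
    refine Primrec.nat_strong_rec (fun (_ : Unit) r => inputVal C r)
      (g := fun _ l => if l.length = 0 then some (C.dig (some Γ'.cons) : ℕ) else
        (l[l.length / 2]?).map fun x =>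
          (if l.length % 2 = 0 then (C.dig (some Γ'.bit0) : ℕ) else C.dig (some Γ'.bit1)) +
            C.B * x) ?_ ?_
    · have hl : Primrec fun p : Unit × List ℕ => p.2.length :=
        Primrec.list_length.comp Primrec.snd
      refine Primrec.ite (Primrec.eq.comp hl (Primrec.const 0)) (Primrec.const _) ?_
      refine Primrec.option_map (Primrec.list_getElem?.comp Primrec.snd
        (Primrec.nat_div.comp hl (Primrec.const 2))) ?_
      have hl' : Primrec fun p : (Unit × List ℕ) × ℕ => p.1.2.length := hl.comp Primrec.fst
      refine Primrec.nat_add.comp (Primrec.ite (Primrec.eq.comp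
        (Primrec.nat_mod.comp hl' (Primrec.const 2)) (Primrec.const 0)) (Primrec.const _)
        (Primrec.const _)) (Primrec.nat_mul.comp (Primrec.const _) Primrec.snd)
    · intro _ n
      by_cases hn : n = 0
      · subst hn
        simp [inputVal_zero]
      · have hlt : n / 2 < n := by omega
        simp only [List.length_map, List.length_range, hn, if_false]
        rw [List.getElem?_map, List.getElem?_range hlt, inputVal_pos C n hn]
        rfl
  exact hrec.comp (Primrec.const ()) Primrec.id

/-- A system of affine rules for which it is undecidable whether the vector concentrated in
the input coordinate with a given entry is equivalent to the halting vector. The rules simulate a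
machine that runs the program coded by its input. -/
theorem exists_undecidable_affine :
    ∃ (ι J : Type) (_ : Fintype ι) (_ : DecidableEq ι) (_ : Finite J) (D : Affine ι J)
      (nr : ℕ → ℕ), Primrec nr ∧
      ¬ ComputablePred fun r => (Pi.single D.i0 (nr r : ℤ) : ι → ℤ) ∈ D.cls := by
  have hf : Partrec fun r : ℕ =>
      Nat.Partrec.Code.eval (Denumerable.ofNat Nat.Partrec.Code r) 0 :=
    Nat.Partrec.Code.eval_part.comp (Computable.ofNat _) (Computable.const 0)
  obtain ⟨c, hc⟩ := ToPartrec.Code.exists_code (Nat.Partrec'.part_iff₁.2 hf)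
  let _ : Inhabited Λ' := ⟨trNormal c Cont'.halt⟩
  have hS : TM2.Supports tr (codeSupp c Cont'.halt) := tr_supports c Cont'.halt
  let X := states tr (codeSupp c Cont'.halt)
  have hX : X.Finite := states_finite tr _
  have hcl := states_closed tr _ hS
  have hhalt : (toSM tr).halt ∈ X := by rintro _ ⟨⟩
  have hinit : (some (tr (trNormal c Cont'.halt), none) : Option (Stm K' Γ' Λ' (Option Γ') × _))
      ∈ X := by
    rintro _ ⟨⟩
    classical
    exact Finset.some_mem_insertNone.2 (Finset.mem_biUnion.2 ⟨_, hS.1, TM2.stmts₁_self⟩)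
  let _ : Fintype X := hX.fintype
  obtain ⟨C, hC⟩ := exists_coding (Γ := Γ') (⟨_, hinit⟩ : X)
  refine ⟨Option K', X × (K' → Option Γ'), inferInstance, inferInstance, inferInstance,
    C.affine ((toSM tr).restrict X hcl hhalt) K'.main, inputVal C, inputVal_primrec C, ?_⟩
  have key : ∀ r, (Pi.single (C.affine ((toSM tr).restrict X hcl hhalt) K'.main).i0
      (inputVal C r : ℤ) : Option K' → ℤ) ∈
        (C.affine ((toSM tr).restrict X hcl hhalt) K'.main).cls ↔
      (Nat.Partrec.Code.eval (Denumerable.ofNat Nat.Partrec.Code r) 0).Dom := by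
    intro r
    have h1 : (Pi.single (some K'.main) (inputVal C r : ℤ) : Option K' → ℤ) =
        C.enc ((⟨_, hinit⟩ : X), K'.elim (trList [r]) [] [] []) := by
      funext k
      rcases k with _ | k
      · simp [Coding.enc, hC]
      · cases k <;> simp [Coding.enc, inputVal, Coding.val]
    change (Pi.single (some K'.main) (inputVal C r : ℤ) : Option K' → ℤ) ∈ _ ↔ _
    rw [h1, StackMachine.Coding.enc_mem_cls_iff]
    simp only [StackMachine.restrict_reaches]
    have h2 := eval_dom_iff tr (init c [r])
    rw [tr_eval] at h2
    refine h2.symm.trans ?_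
    have h3 := hc ⟨[r], rfl⟩
    simp only at h3
    rw [h3]
    rfl
  intro h
  refine ComputablePred.halting_problem 0 ?_
  have h' : ComputablePred fun r : ℕ =>
      (Nat.Partrec.Code.eval (Denumerable.ofNat Nat.Partrec.Code r) 0).Dom :=
    h.of_eq key
  refine (ComputablePred.computable_of_manyOneReducible (q := fun r : ℕ =>
      (Nat.Partrec.Code.eval (Denumerable.ofNat Nat.Partrec.Code r) 0).Dom) ?_ h')
  refine ⟨Encodable.encode, Computable.encode, fun a => ?_⟩
  simp only [Denumerable.ofNat_encode]

end Machine

/-! ### A finitely presented group with an unsolvable problem for involutions -/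

section StageOne
open Affine

/-- The word representing `Affine.test` in the four letters `e, f, d, s`. -/
def testWord (k : ℕ) : List (Fin 4 × Bool) :=
  let up := (List.range k).map fun _ => ((2 : Fin 4), true)
  let down := (List.range k).map fun _ => ((2 : Fin 4), false)
  let y := up ++ (1, true) :: down
  let y' := up ++ (1, false) :: down
  let c := (0, true) :: y ++ (0, false) :: y'
  let c' := y ++ (0, true) :: y' ++ [(0, false)]
  (3, true) :: c ++ (3, false) :: c'

theorem testWord_primrec : Primrec testWord := by
  have hup : ∀ b : Bool, Primrec fun k : ℕ => (List.range k).map fun _ => ((2 : Fin 4), b) := fun b =>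
    Primrec.list_map Primrec.list_range (Primrec.const _)
  have hc : ∀ (x : Fin 4 × Bool) {g : ℕ → List (Fin 4 × Bool)}, Primrec g →
      Primrec fun k => x :: g k := fun x _ hg => Primrec.list_cons.comp (Primrec.const x) hg
  have ha : ∀ {g g' : ℕ → List (Fin 4 × Bool)}, Primrec g → Primrec g' →
      Primrec fun k => g k ++ g' k := fun hg hg' => Primrec.list_append.comp hg hg'
  have hy : ∀ b : Bool, Primrec fun k : ℕ => (List.range k).map (fun _ => ((2 : Fin 4), true)) ++
      (1, b) :: (List.range k).map (fun _ => ((2 : Fin 4), false)) := fun b =>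
    ha (hup _) (hc _ (hup _))
  exact ha (hc _ (ha (hc _ (hy _)) (hc _ (hy _))))
    (hc _ (ha (ha (hy _) (hc _ (hy _))) (Primrec.const _)))

theorem lift_testWord {G : Type} [Group G] (v : Fin 4 → G) (k : ℕ) :
    FreeGroup.lift v (FreeGroup.mk (testWord k)) = test v k := by
  rw [FreeGroup.lift_mk]
  simp only [testWord, test, List.map_cons, List.map_append,
    List.prod_cons, List.prod_append, List.map_const', List.length_range,
    cond_true, cond_false, List.map_nil, List.prod_nil, commutatorElement_def]
  simp [mul_assoc]

/-- A finite presentation for which it is undecidable whether elements of a computable sequence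
of elements of order at most two are trivial. -/
theorem exists_stage_one :
    ∃ (γ : Type) (_ : Finite γ) (R : Set (FreeGroup γ)) (_ : R.Finite) (x : Fin 4 → γ)
      (w : ℕ → List (Fin 4 × Bool)), Computable w ∧
      (∀ r, FreeGroup.lift (fun t => PresentedGroup.of (rels := R) (x t))
        (FreeGroup.mk (w r)) ^ 2 = 1) ∧
      ¬ ComputablePred fun r => FreeGroup.lift (fun t => PresentedGroup.of (rels := R) (x t))
        (FreeGroup.mk (w r)) = 1 := by
  obtain ⟨ι, J, _, _, _, D, nr, hnr, hD⟩ := exists_undecidable_affine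
  let R : Set (FreeGroup (Gen ι J)) := Set.range (D.relator FreeGroup.of)
  have hv : ∀ r, D.relator (fun g => PresentedGroup.of (rels := R) g) r = 1 := by
    intro r
    have := D.map_relator (PresentedGroup.mk R) FreeGroup.of r
    refine this.symm.trans ?_
    exact (QuotientGroup.eq_one_iff _).2 (Subgroup.subset_normalClosure ⟨r, rfl⟩)
  refine ⟨Gen ι J, inferInstance, R, Set.finite_range _, fun t => .inl t,
    fun r => testWord (nr r), (testWord_primrec.comp hnr).to_comp, ?_, ?_⟩
  · intro r
    rw [lift_testWord]
    exact D.test_sq hv _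
  · intro h
    refine hD (h.of_eq fun r => ?_)
    rw [lift_testWord]
    refine ⟨fun h => ?_, D.test_eq_one hv⟩
    obtain ⟨Γ, _, v, hrel, hmodel⟩ := D.exists_model
    have hl : ∀ r ∈ R, FreeGroup.lift v r = 1 := by
      rintro _ ⟨r, rfl⟩
      rw [D.map_relator]
      convert hrel r using 2
      funext g
      simp
    refine hmodel _ ?_
    have h2 := congrArg (PresentedGroup.toGroup hl) h
    rw [map_one] at h2
    rw [← h2]
    simp [test, map_commutatorElement]

end StageOne

/-! ### Higman quadruples -/

section Higman

/-- Cyclic quadruples with each element conjugating the next one to its square. -/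
def Higman {G : Type} [Group G] (x : Fin 4 → G) : Prop :=
  ∀ i, x i * x (i + 1) * (x i)⁻¹ = x (i + 1) ^ 2

theorem Higman.map {G H : Type} [Group G] [Group H] {x : Fin 4 → G} (h : Higman x)
    (φ : G →* H) : Higman fun i => φ (x i) := fun i => by
  simpa using congrArg φ (h i)

theorem Higman.pow_conj {G : Type} [Group G] {x : Fin 4 → G} (h : Higman x) (i : Fin 4) (n : ℕ) :
    x i ^ n * x (i + 1) * (x i ^ n)⁻¹ = x (i + 1) ^ 2 ^ n := by
  induction n with
  | zero => simp
  | succ n ih =>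
    calc x i ^ (n + 1) * x (i + 1) * (x i ^ (n + 1))⁻¹
        = x i * (x i ^ n * x (i + 1) * (x i ^ n)⁻¹) * (x i)⁻¹ := by
          rw [pow_succ']; group
      _ = x (i + 1) ^ 2 ^ (n + 1) := by
          rw [ih, ← conj_pow, h i, ← pow_mul, pow_succ']

/-- No prime divides the orders of the members of a Higman quadruple in a finite group: a prime
`p` dividing one order divides `2 ^ n - 1` for the preceding order `n`, so that the order of `2`
modulo `p` has a smaller prime factor dividing `n`. -/
theorem Higman.not_dvd {G : Type} [Group G] [Finite G] {x : Fin 4 → G} (h : Higman x)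
    (p : ℕ) (hp : p.Prime) (i : Fin 4) : ¬ p ∣ orderOf (x i) := by
  induction p using Nat.strong_induction_on generalizing i with
  | _ p ih =>
    obtain ⟨i, rfl⟩ : ∃ j, j + 1 = i := ⟨i - 1, by simp⟩
    intro hdvd
    have : Fact p.Prime := ⟨hp⟩
    have h1 := h.pow_conj i (orderOf (x i))
    rw [pow_orderOf_eq_one] at h1
    have h2 : x (i + 1) ^ 1 = x (i + 1) ^ 2 ^ orderOf (x i) := by simpa using h1
    have h3 := (pow_eq_pow_iff_modEq.1 h2).of_dvd hdvd
    have h4 : (2 : ZMod p) ^ orderOf (x i) = 1 := by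
      have := (ZMod.natCast_eq_natCast_iff _ _ _).2 h3
      push_cast at this
      exact this.symm
    have h5 : (2 : ZMod p) ≠ 0 := by
      intro h0
      rw [h0, zero_pow (orderOf_pos _).ne'] at h4
      exact zero_ne_one h4
    have h6 : orderOf (2 : ZMod p) ≠ 1 := by
      rw [Ne, orderOf_eq_one_iff]
      intro h
      have : (1 : ZMod p) = 0 := by linear_combination h
      exact one_ne_zero this
    have h7 : orderOf (2 : ZMod p) ∣ p - 1 := ZMod.orderOf_dvd_card_sub_one h5
    have h8 := hp.two_le
    have h9 : (orderOf (2 : ZMod p)).minFac ≤ p - 1 :=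
      Nat.le_of_dvd (by omega) ((Nat.minFac_dvd _).trans h7)
    exact ih _ (by omega) (Nat.minFac_prime h6) i
      ((Nat.minFac_dvd _).trans (orderOf_dvd_of_pow_eq_one h4))

theorem Higman.eq_one {G : Type} [Group G] [Finite G] {x : Fin 4 → G} (h : Higman x)
    (i : Fin 4) : x i = 1 := by
  by_contra hne
  have h1 : orderOf (x i) ≠ 1 := by rwa [Ne, orderOf_eq_one_iff]
  exact h.not_dvd _ (Nat.minFac_prime h1) i (Nat.minFac_dvd _)

/-- A group generated by members of Higman quadruples has no finite quotients, as the quadruples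
become trivial in the quotient by the normal core of a subgroup of finite index. -/
theorem nfq_of_higman {G : Type} [Group G] (S : Set G) (hS : Subgroup.closure S = ⊤)
    (h : ∀ s ∈ S, ∃ x : Fin 4 → G, Higman x ∧ ∃ i, x i = s) : NFQ G := by
  intro H hH
  have : H.FiniteIndex := ⟨hH⟩
  have : Finite (G ⧸ H.normalCore) := inferInstance
  refine top_le_iff.1 (hS ▸ (Subgroup.closure_le _).2 fun s hs => H.normalCore_le ?_)
  obtain ⟨x, hx, i, rfl⟩ := h s hs
  exact (QuotientGroup.eq_one_iff _).1 ((hx.map (QuotientGroup.mk' H.normalCore)).eq_one i)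

theorem pushout_base_injective {ι H : Type} {G : ι → Type} [∀ i, Group (G i)] [Group H]
    {φ : ∀ i, H →* G i} (hφ : ∀ i, Function.Injective (φ i)) (i : ι) :
    Function.Injective (Monoid.PushoutI.base φ) := by
  rw [← Monoid.PushoutI.of_comp_eq_base (φ := φ) i]
  exact (Monoid.PushoutI.of_injective hφ i).comp (hφ i)

/-- The translation `x ↦ x + 1` of the rational line. -/
def shiftQ : Equiv.Perm ℚ := Equiv.addRight 1

/-- The doubling `x ↦ 2 * x` of the rational line. -/
def doubleQ : Equiv.Perm ℚ := Equiv.mulRight₀ 2 two_ne_zero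

theorem shiftQ_zpow (z : ℤ) : (shiftQ ^ z) 0 = z := by
  have h : ∀ n : ℕ, (shiftQ ^ n) 0 = n := by
    intro n
    induction n with
    | zero => rfl
    | succ n ih => rw [pow_succ', Equiv.Perm.mul_apply, ih]; simp [shiftQ]
  obtain ⟨n, rfl | rfl⟩ := z.eq_nat_or_neg
  · exact_mod_cast h n
  · rw [zpow_neg, Equiv.Perm.inv_eq_iff_eq]
    have : ∀ (n : ℕ) (x : ℚ), (shiftQ ^ n) x = x + n := by
      intro n x
      induction n with
      | zero => simp
      | succ n ih => rw [pow_succ', Equiv.Perm.mul_apply, ih]; simp [shiftQ, add_assoc]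
    rw [zpow_natCast, this]
    simp

theorem doubleQ_zpow (z : ℤ) (x : ℚ) : (doubleQ ^ z) x = x * 2 ^ z := by
  have h : ∀ (n : ℕ) (x : ℚ), (doubleQ ^ n) x = x * 2 ^ n := by
    intro n x
    induction n with
    | zero => simp
    | succ n ih => rw [pow_succ', Equiv.Perm.mul_apply, ih]; simp [doubleQ, pow_succ, mul_assoc]
  obtain ⟨n, rfl | rfl⟩ := z.eq_nat_or_neg
  · exact_mod_cast h n x
  · rw [zpow_neg, Equiv.Perm.inv_eq_iff_eq, zpow_natCast, h]
    simp

theorem doubleQ_conj : doubleQ * shiftQ * doubleQ⁻¹ = shiftQ ^ 2 := by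
  rw [mul_inv_eq_iff_eq_mul]
  ext x
  simp [doubleQ, shiftQ, pow_two]
  ring

theorem zpowersHom_injective_of {G : Type} [Group G] (g : G) (h : ∀ z : ℤ, g ^ z = 1 → z = 0) :
    Function.Injective (zpowersHom G g) := by
  rw [injective_iff_map_eq_one]
  intro z hz
  exact h z.toAdd (by simpa using hz)

theorem doubleQ_inj (z : ℤ) (h : doubleQ ^ z = 1) : z = 0 := by
  have h1 := congrArg (fun f : Equiv.Perm ℚ => f 1) h
  simp only [doubleQ_zpow, Equiv.Perm.one_apply, one_mul] at h1
  exact (zpow_eq_one_iff_right₀ (by norm_num) (by norm_num)).1 h1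

theorem shiftQ_inj (z : ℤ) (h : shiftQ ^ z = 1) : z = 0 := by
  have h1 := congrArg (fun f : Equiv.Perm ℚ => f 0) h
  simpa [shiftQ_zpow] using h1

open Monoid in
/-- Higman's group: there is a Higman quadruple whose first member has infinite order. It lies in
an amalgam of two groups over a free group of rank two, each of them being an amalgam of two
copies of the group of rational permutations over an infinite cyclic group. -/
theorem exists_higman : ∃ (G : Type) (_ : Group G) (x : Fin 4 → G), Higman x ∧
    Function.Injective (zpowersHom G (x 0)) := by
  -- In copy `i` of the `s`-th inner amalgam the amalgamated generator doubles if `i = s`.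
  let p : Fin 2 → Fin 2 → Equiv.Perm ℚ := fun s i => if i = s then doubleQ else shiftQ
  let p' : Fin 2 → Fin 2 → Equiv.Perm ℚ := fun s i => if i = s then shiftQ else doubleQ
  let φ : ∀ _ _ : Fin 2, Multiplicative ℤ →* Equiv.Perm ℚ := fun s i => zpowersHom _ (p s i)
  let g : ∀ _ _ : Fin 2, Multiplicative ℤ →* Equiv.Perm ℚ := fun s i => zpowersHom _ (p' s i)
  have hφ : ∀ s i, Function.Injective (φ s i) := by
    intro s i
    by_cases h : i = s
    · simpa [φ, p, h] using zpowersHom_injective_of _ doubleQ_inj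
    · simpa [φ, p, h] using zpowersHom_injective_of _ shiftQ_inj
  let φ0 : ∀ _ : Fin 2, Unit →* Multiplicative ℤ := fun _ => 1
  have hφ0 : ∀ i, Function.Injective (φ0 i) := fun i => Function.injective_of_subsingleton _
  let F := PushoutI φ0
  let Φ : ∀ s, F →* PushoutI (φ s) := fun s =>
    PushoutI.lift (fun i => (PushoutI.of i).comp (g s i)) 1 (fun i => by ext; simp [φ0])
  have hΦ : ∀ s, Function.Injective (Φ s) := by
    intro s
    refine pushoutI_map_injective (φ := φ0) (φ' := φ s) hφ0 (hφ s) (1 : Unit →* Multiplicative ℤ)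
      (Function.injective_of_subsingleton _) (g s) ?_ (Φ s) ?_ ?_
    · intro i x hx
      suffices x = 1 by rw [this]; exact one_mem _
      obtain ⟨w, hw⟩ := hx
      have h0 := congrArg (fun f : Equiv.Perm ℚ => f 0) hw
      by_cases h : i = s
      · simp only [φ, g, p, p', h, if_true, zpowersHom_apply, doubleQ_zpow, shiftQ_zpow,
          zero_mul] at h0
        have : x.toAdd = 0 := by exact_mod_cast h0.symm
        exact Multiplicative.toAdd.injective this
      · simp only [φ, g, p, p', h, if_false, zpowersHom_apply, doubleQ_zpow, shiftQ_zpow,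
          zero_mul] at h0
        have hw0 : w.toAdd = 0 := by exact_mod_cast h0
        simp only [φ, g, p, p', h, if_false, zpowersHom_apply, hw0, zpow_zero] at hw
        exact Multiplicative.toAdd.injective (doubleQ_inj _ hw.symm)
    · intro i x
      simp [Φ]
    · intro x
      simp [Φ]
  let X : Fin 2 → F := fun i => PushoutI.of i (.ofAdd 1)
  have hX : Function.Injective (zpowersHom F (X 0)) := by
    have : zpowersHom F (X 0) = PushoutI.of (φ := φ0) 0 := by
      ext
      simp [X]
    rw [this]
    exact PushoutI.of_injective hφ0 0
  let D : ∀ s, PushoutI (φ s) := fun s => PushoutI.base (φ s) (.ofAdd 1)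
  have h1 : ∀ s, D s * Φ s (X s) * (D s)⁻¹ = Φ s (X s) ^ 2 := by
    intro s
    have e1 : D s = PushoutI.of s doubleQ := by
      simp only [D]
      rw [← PushoutI.of_apply_eq_base (φ s) s]
      simp [φ, p]
    have e2 : Φ s (X s) = PushoutI.of s shiftQ := by
      refine (PushoutI.lift_of ..).trans ?_
      simp [g, p']
    rw [e1, e2, ← map_inv, ← map_mul, ← map_mul, ← map_pow, doubleQ_conj]
  have h2 : ∀ s i, i ≠ s → Φ s (X i) * D s * (Φ s (X i))⁻¹ = D s ^ 2 := by
    intro s i hi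
    have e1 : D s = PushoutI.of i shiftQ := by
      simp only [D]
      rw [← PushoutI.of_apply_eq_base (φ s) i]
      simp [φ, p, hi]
    have e2 : Φ s (X i) = PushoutI.of i doubleQ := by
      refine (PushoutI.lift_of ..).trans ?_
      simp [g, p', hi]
    rw [e1, e2, ← map_inv, ← map_mul, ← map_mul, ← map_pow, doubleQ_conj]
  have hbase : ∀ s y, PushoutI.base Φ y = PushoutI.of (φ := Φ) s (Φ s y) := fun s y =>
    (PushoutI.of_apply_eq_base Φ s y).symm
  refine ⟨PushoutI Φ, inferInstance, ![PushoutI.base Φ (X 0), PushoutI.of 1 (D 1),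
    PushoutI.base Φ (X 1), PushoutI.of 0 (D 0)], ?_, ?_⟩
  · intro i
    fin_cases i
    · change PushoutI.base Φ (X 0) * PushoutI.of 1 (D 1) * (PushoutI.base Φ (X 0))⁻¹ =
        PushoutI.of 1 (D 1) ^ 2
      rw [hbase 1, ← map_inv, ← map_mul, ← map_mul, ← map_pow, h2 1 0 (by decide)]
    · change PushoutI.of 1 (D 1) * PushoutI.base Φ (X 1) * (PushoutI.of 1 (D 1))⁻¹ =
        PushoutI.base Φ (X 1) ^ 2
      rw [hbase 1, ← map_inv, ← map_mul, ← map_mul, ← map_pow, h1 1]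
    · change PushoutI.base Φ (X 1) * PushoutI.of 0 (D 0) * (PushoutI.base Φ (X 1))⁻¹ =
        PushoutI.of 0 (D 0) ^ 2
      rw [hbase 0, ← map_inv, ← map_mul, ← map_mul, ← map_pow, h2 0 1 (by decide)]
    · change PushoutI.of 0 (D 0) * PushoutI.base Φ (X 0) * (PushoutI.of 0 (D 0))⁻¹ =
        PushoutI.base Φ (X 0) ^ 2
      rw [hbase 0, ← map_inv, ← map_mul, ← map_mul, ← map_pow, h1 0]
  · have : zpowersHom (PushoutI Φ) (PushoutI.base Φ (X 0)) =
        (PushoutI.base Φ).comp (zpowersHom F (X 0)) := by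
      ext
      simp
    change Function.Injective (zpowersHom (PushoutI Φ) (PushoutI.base Φ (X 0)))
    rw [this]
    exact (pushout_base_injective hΦ 0).comp hX

end Higman

/-! ### Embedding into a finitely presented group without finite quotients -/

section StageTwo

variable {γ : Type}

/-- Each generator `g` of a group is written as `a⁻¹ * a'`, with `a` independent of `g`, where
`a` and `a'` start the Higman quadruples indexed by `none` and `some g`. -/
def toHigman (γ : Type) : FreeGroup γ →* FreeGroup (Option γ × Fin 4) :=
  FreeGroup.lift fun g => (FreeGroup.of (none, 0))⁻¹ * FreeGroup.of (some g, 0)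

/-- The relators making the generators Higman quadruples. -/
def higmanRel (p : Option γ × Fin 4) : FreeGroup (Option γ × Fin 4) :=
  FreeGroup.of p * FreeGroup.of (p.1, p.2 + 1) * (FreeGroup.of p)⁻¹ *
    (FreeGroup.of (p.1, p.2 + 1) ^ 2)⁻¹

/-- A finitely presented group embeds in a finitely presented one without finite quotients, namely
in the group on Higman quadruples obtained by rewriting its relators through `toHigman`. To see that
the map is injective, let `H` contain a Higman quadruple `x` with `x 0` of infinite order and embed
`P × ℤ × H`, for `P` the given group, in a group with elements `t j` conjugating the infinite cyclic
group of `(g, 1, 1)` to that of `(1, 0, x 0)`, where `g ∈ P` is the generator `j`, or trivial for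
`j = none`. The conjugates of `x` by the `(t j)⁻¹` satisfy the relators, and `(g, 0, 1)` is
recovered as `(1, 1, 1)⁻¹ * (g, 1, 1)`. -/
theorem exists_nfq_embedding [Finite γ] (R : Set (FreeGroup γ)) (hR : R.Finite) :
    ∃ (γ' : Type) (_ : Finite γ') (R' : Set (FreeGroup γ')) (_ : R'.Finite)
      (φ : PresentedGroup R →* PresentedGroup R'), Function.Injective φ ∧
      NFQ (PresentedGroup R') := by
  let R' : Set (FreeGroup (Option γ × Fin 4)) := Set.range higmanRel ∪ toHigman γ '' R
  refine ⟨Option γ × Fin 4, inferInstance, R', (Set.finite_range _).union (hR.image _),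
    PresentedGroup.map (toHigman γ) fun r hr => .inr ⟨r, hr, rfl⟩, ?_, ?_⟩
  · obtain ⟨H, _, x, hx, hinf⟩ := exists_higman
    let a : Option γ → PresentedGroup R := fun j => j.elim 1 fun g => PresentedGroup.of g
    let i : ∀ _ : Option γ, Multiplicative ℤ →* (PresentedGroup R × Multiplicative ℤ) × H := fun j =>
      ((zpowersHom (PresentedGroup R) (a j)).prod (MonoidHom.id _)).prod 1
    let k : ∀ _ : Option γ, Multiplicative ℤ →* (PresentedGroup R × Multiplicative ℤ) × H := fun _ =>
      (1 : Multiplicative ℤ →* PresentedGroup R × Multiplicative ℤ).prod (zpowersHom H (x 0))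
    obtain ⟨Γ, _, e, t, he, ht⟩ := exists_conj_overgroup (fun _ : Option γ => Multiplicative ℤ)
      ((PresentedGroup R × Multiplicative ℤ) × H) i k (fun j z z' h => congrArg (fun p : (PresentedGroup R × Multiplicative ℤ) × H => p.1.2) h)
      (fun j z z' h => hinf (congrArg (fun p : (PresentedGroup R × Multiplicative ℤ) × H => p.2) h))
    let y : Option γ × Fin 4 → Γ := fun p => (t p.1)⁻¹ * e (1, x p.2) * t p.1
    have hy0 : ∀ j, y (j, 0) = e ((a j, .ofAdd 1), 1) := by
      intro j
      have h1 := ht j (.ofAdd 1)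
      have h2 : k j (.ofAdd 1) = (1, x 0) := by simp [k]
      have h3 : i j (.ofAdd 1) = ((a j, .ofAdd 1), 1) := by simp [i]
      rw [h2, h3] at h1
      simp only [y]
      rw [← h1]
      group
    have hrel : ∀ r ∈ R', FreeGroup.lift y r = 1 := by
      rintro _ (⟨⟨j, l⟩, rfl⟩ | ⟨r, hr, rfl⟩)
      · have h1 := hx l
        have h2 : y (j, l) * y (j, l + 1) * (y (j, l))⁻¹ = y (j, l + 1) ^ 2 := by
          have h3 := (hx.map (e.comp (MonoidHom.inr (PresentedGroup R × Multiplicative ℤ) H))) l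
          simp only [MonoidHom.comp_apply, MonoidHom.inr_apply] at h3
          have h4 : y (j, l + 1) ^ 2 = (t j)⁻¹ * e (1, x (l + 1)) ^ 2 * t j := by
            simp only [y, pow_two]
            group
          rw [h4, ← h3]
          simp only [y]
          group
        simp [higmanRel, h2]
      · have h1 : (FreeGroup.lift y).comp (toHigman γ) =
            (e.comp ((MonoidHom.inl (PresentedGroup R × Multiplicative ℤ) H).comp (MonoidHom.inl _ _))).comp
              (PresentedGroup.mk R) := by
          ext g
          simp only [MonoidHom.comp_apply, toHigman, FreeGroup.lift_apply_of, map_mul, map_inv, hy0]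
          rw [← map_inv, ← map_mul]
          simp [a, PresentedGroup.of]
        have h2 := DFunLike.congr_fun h1 r
        simp only [MonoidHom.comp_apply] at h2
        rw [h2, PresentedGroup.one_of_mem hr]
        exact map_one e
    have hcomp : (PresentedGroup.toGroup hrel).comp (PresentedGroup.map (toHigman γ)
        (t := R') (fun r (hr : r ∈ R) => .inr ⟨r, hr, rfl⟩)) =
          e.comp ((MonoidHom.inl (PresentedGroup R × Multiplicative ℤ) H).comp (MonoidHom.inl _ _)) := by
      refine PresentedGroup.ext fun g => ?_
      change FreeGroup.lift y (toHigman γ (FreeGroup.of g)) = _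
      simp only [toHigman, FreeGroup.lift_apply_of, map_mul, map_inv, hy0]
      rw [← map_inv, ← map_mul]
      simp [a]
    refine Function.Injective.of_comp (f := PresentedGroup.toGroup hrel) ?_
    rw [← MonoidHom.coe_comp, hcomp]
    exact he.comp (fun p q h => congrArg (fun p : (PresentedGroup R × Multiplicative ℤ) × H => p.1.1) h)
  · refine nfq_of_higman (Set.range PresentedGroup.of) (PresentedGroup.closure_range_of R') ?_
    rintro _ ⟨⟨j, l⟩, rfl⟩
    refine ⟨fun l => PresentedGroup.of (j, l), fun l => ?_, l, rfl⟩
    have := PresentedGroup.one_of_mem (show higmanRel (j, l) ∈ R' from .inl ⟨_, rfl⟩)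
    simpa [higmanRel, mul_inv_eq_one, PresentedGroup.of] using this

theorem NFQ.of_surjective {G H : Type} [Group G] [Group H] (h : NFQ G) (f : G →* H)
    (hf : Function.Surjective f) : NFQ H := by
  intro K hK
  have h1 := h (K.comap f) (by rwa [Subgroup.index_comap_of_surjective K hf])
  rw [eq_top_iff]
  intro y _
  obtain ⟨x, rfl⟩ := hf y
  exact Subgroup.mem_comap.1 (h1 ▸ Subgroup.mem_top x)

theorem NFQ.coprod {G H : Type} [Group G] [Group H] (hG : NFQ G) (hH : NFQ H) :
    NFQ (Monoid.Coprod G H) := by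
  intro K hK
  have : K.FiniteIndex := ⟨hK⟩
  rw [eq_top_iff, ← Monoid.Coprod.range_inl_sup_range_inr, sup_le_iff]
  constructor
  · rintro _ ⟨x, rfl⟩
    have := hG (K.comap (Monoid.Coprod.inl : _ →* Monoid.Coprod G H))
      (by rw [Subgroup.index_comap]; exact mt Subgroup.index_eq_zero_of_relIndex_eq_zero hK)
    exact Subgroup.mem_comap.1 (this ▸ Subgroup.mem_top x)
  · rintro _ ⟨x, rfl⟩
    have := hH (K.comap (Monoid.Coprod.inr : _ →* Monoid.Coprod G H))
      (by rw [Subgroup.index_comap]; exact mt Subgroup.index_eq_zero_of_relIndex_eq_zero hK)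
    exact Subgroup.mem_comap.1 (this ▸ Subgroup.mem_top x)

end StageTwo

/-! ### Free products have trivial center -/

section Center
open Monoid

/-- A reduced word `w` ending in the factor `j` does not commute with a nontrivial `g` from another
factor, since `w * g * w⁻¹` is reduced as written and has more than one syllable. -/
theorem center_coprodI {ι : Type} [Nontrivial ι] (G : ι → Type) [∀ i, Group (G i)]
    [∀ i, Nontrivial (G i)] : Subgroup.center (CoprodI G) = ⊥ := by
  classical
  rw [Subgroup.eq_bot_iff_forall]
  intro c hc
  by_contra hne
  obtain ⟨i, j, w, hw⟩ := CoprodI.NeWord.of_word (CoprodI.Word.equiv c) (by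
    intro h
    refine hne ?_
    rw [← CoprodI.Word.equiv.symm_apply_apply c, h]
    rfl)
  have hwp : w.prod = c := by
    rw [CoprodI.NeWord.prod, hw]
    exact CoprodI.Word.equiv.symm_apply_apply c
  obtain ⟨l, hl⟩ := exists_ne j
  obtain ⟨g, hg⟩ := exists_ne (1 : G l)
  let u := (w.append hl.symm (.singleton g hg)).append hl w.inv
  have h1 : u.prod = (CoprodI.NeWord.singleton g hg).prod := by
    simp only [u, CoprodI.NeWord.append_prod, CoprodI.NeWord.inv_prod,
      CoprodI.NeWord.prod_singleton, hwp]
    rw [← Subgroup.mem_center_iff.1 hc, mul_inv_cancel_right]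
  have h2 := CoprodI.Word.equiv.symm.injective
    (show CoprodI.Word.equiv.symm u.toWord = CoprodI.Word.equiv.symm
      (CoprodI.NeWord.singleton g hg).toWord from h1)
  have h3 := congrArg (fun v => v.toList.length) h2
  have h4 := List.length_pos_iff.2 w.toList_ne_nil
  simp [u, CoprodI.NeWord.toWord, CoprodI.NeWord.toList] at h3
  omega

theorem center_of_mulEquiv {G H : Type} [Group G] [Group H] (e : G ≃* H)
    (h : Subgroup.center H = ⊥) : Subgroup.center G = ⊥ := by
  rw [Subgroup.eq_bot_iff_forall]
  intro c hc
  have hc' : e c ∈ Subgroup.center H := by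
    rw [Subgroup.mem_center_iff] at hc ⊢
    intro g
    obtain ⟨g, rfl⟩ := e.surjective g
    rw [← map_mul, ← map_mul, hc]
  rw [h] at hc'
  exact e.map_eq_one_iff.1 hc'

theorem center_coprod (G : Type) [Group G] [Nontrivial G] :
    Subgroup.center (Coprod G G) = ⊥ := by
  let e : Coprod G G ≃* CoprodI fun _ : Bool => G :=
    MonoidHom.toMulEquiv
      (Coprod.lift (CoprodI.of (M := fun _ : Bool => G) (i := true))
        (CoprodI.of (M := fun _ : Bool => G) (i := false)))
      (CoprodI.lift fun b => cond b Coprod.inl Coprod.inr)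
      (Coprod.hom_ext (by ext; simp) (by ext; simp))
      (CoprodI.ext_hom _ _ fun b => by cases b <;> ext <;> simp)
  exact center_of_mulEquiv e (center_coprodI _)

end Center

/-! ### Rewriting words in new generators -/

section Rewrite

variable {γ δ : Type}

/-- Substitution of the word `u i` for the `i`-th letter in a word. -/
def substWord (u : γ → List (δ × Bool)) (w : List (γ × Bool)) : List (δ × Bool) :=
  w.flatMap fun p => cond p.2 (u p.1) (FreeGroup.invRev (u p.1))

theorem mk_substWord (u : γ → List (δ × Bool)) (w : List (γ × Bool)) :
    FreeGroup.mk (substWord u w) =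
      FreeGroup.lift (fun i => FreeGroup.mk (u i)) (FreeGroup.mk w) := by
  induction w with
  | nil => rfl
  | cons p w ih =>
    have h1 : substWord u (p :: w) =
        cond p.2 (u p.1) (FreeGroup.invRev (u p.1)) ++ substWord u w := rfl
    rw [h1, ← FreeGroup.mul_mk, ih, FreeGroup.lift_mk, FreeGroup.lift_mk, List.map_cons,
      List.prod_cons]
    obtain ⟨i, b⟩ := p
    cases b <;> simp [FreeGroup.inv_mk]

theorem computable_substWord [Primcodable γ] [Finite γ] [Primcodable δ]
    (u : γ → List (δ × Bool)) : Computable (substWord u) :=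
  (Primrec.list_flatMap Primrec.id ((Primrec.dom_finite
    fun p : γ × Bool => cond p.2 (u p.1) (FreeGroup.invRev (u p.1))).comp₂
      Primrec₂.right)).to_comp

end Rewrite

/-! ### The group -/

/-- There is a finitely presented NFQ group `A₂` with trivial center, given by a finite
presentation with surjection `f : FreeGroup (Fin n) →* A₂`, and a computable sequence `z`
of words, each representing an element of order at most `2` in `A₂`, such that the word
problem for the set of words `{z r}` is unsolvable. -/
theorem exists_order_two_words_unsolvable_wp :
    ∃ (A : Type) (instA : Group A), letI := instA;
      IsFinitelyPresented A ∧ NFQ A ∧ Subgroup.center A = ⊥ ∧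
      ∃ (n : ℕ) (f : FreeGroup (Fin n) →* A),
        Function.Surjective f ∧
        (∃ R : Finset (FreeGroup (Fin n)),
          f.ker = Subgroup.normalClosure (R : Set (FreeGroup (Fin n)))) ∧
        ∃ z : ℕ → List (Fin n × Bool), Computable z ∧
          (∀ r : ℕ, (f (FreeGroup.mk (z r))) ^ 2 = 1) ∧
          ¬ ∃ q : ℕ → Bool, Computable q ∧
            ∀ r : ℕ, q r = true ↔ f (FreeGroup.mk (z r)) = 1 := by
  obtain ⟨γ, _, R, hR, x, w, hw, hsq, hund⟩ := exists_stage_one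
  obtain ⟨γ₂, _, R₂, hR₂, φ, hφ, hnfq⟩ := exists_nfq_embedding R hR
  have : Nontrivial (PresentedGroup R₂) := by
    by_contra hn
    rw [not_nontrivial_iff_subsingleton] at hn
    refine hund (ComputablePred.computable_iff.2 ⟨fun _ => true, Computable.const true, ?_⟩)
    funext r
    simp [hφ (Subsingleton.elim (φ _) (φ 1))]
  let Rc : Set (FreeGroup (γ₂ ⊕ γ₂)) :=
    FreeGroup.map Sum.inl '' R₂ ∪ FreeGroup.map Sum.inr '' R₂
  let ε := Finite.equivFin (γ₂ ⊕ γ₂)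
  let R₃ : Set (FreeGroup (Fin (Nat.card (γ₂ ⊕ γ₂)))) := FreeGroup.freeGroupCongr ε '' Rc
  have hR₃ : R₃.Finite := ((hR₂.image _).union (hR₂.image _)).image _
  let e : Monoid.Coprod (PresentedGroup R₂) (PresentedGroup R₂) ≃* PresentedGroup R₃ :=
    (PresentedGroup.coprodPresentations R₂ R₂).symm.trans
      (PresentedGroup.equivPresentedGroup Rc ε)
  let Φ : PresentedGroup R →* PresentedGroup R₃ :=
    e.toMonoidHom.comp (Monoid.Coprod.inl.comp φ)
  have hΦ : Function.Injective Φ := e.injective.comp (Monoid.Coprod.inl_injective.comp hφ)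
  choose u hu using fun t => PresentedGroup.mk_surjective R₃ (Φ (.of (x t)))
  have key : ∀ r, PresentedGroup.mk R₃ (FreeGroup.mk (substWord (fun t => (u t).toWord) (w r))) =
      Φ (FreeGroup.lift (fun t => PresentedGroup.of (rels := R) (x t)) (FreeGroup.mk (w r))) := by
    intro r
    rw [mk_substWord]
    simp only [← MonoidHom.comp_apply]
    congr 1
    ext t
    simp [FreeGroup.mk_toWord, hu]
  refine ⟨PresentedGroup R₃, inferInstance, ⟨_, hR₃.toFinset, ⟨?_⟩⟩,
    (hnfq.coprod hnfq).of_surjective e.toMonoidHom e.surjective,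
    center_of_mulEquiv e.symm (center_coprod _), _, PresentedGroup.mk R₃,
    PresentedGroup.mk_surjective R₃, ⟨hR₃.toFinset, ?_⟩,
    fun r => substWord (fun t => (u t).toWord) (w r), (computable_substWord _).comp hw, ?_, ?_⟩
  · rw [hR₃.coe_toFinset]
  · rw [hR₃.coe_toFinset]
    exact QuotientGroup.ker_mk' _
  · intro r
    rw [key, ← map_pow, hsq, map_one]
  · rintro ⟨q, hq, h⟩
    refine hund (ComputablePred.computable_iff.2 ⟨q, hq, ?_⟩)
    funext r
    rw [h, key, map_eq_one_iff Φ hΦ]
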